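/- Let K be a Hopf subalgebra of H and C a simple subcoalgebra of H. Then {}^C K is the largest Hopf subalgebra L of H with the property LC ⊆ CK; that is, {}^C K·C ⊆ CK, and any Hopf subalgebra L of H with L·C ⊆ CK satisfies L ⊆ {}^C K. -/

import Mathlib

open TensorProduct

namespace MackeyPaper

noncomputable section

universe v

variable (k : Type) [Field k] [CharZero k] [IsAlgClosed k]
variable (H : Type) [Ring H] [HopfAlgebra k H]

/-- A subcoalgebra of `H`: a `k`-subspace `C` with `Δ(C) ⊆ C ⊗ C`. -/
def IsSubcoalgebra (C : Submodule k H) : Prop :=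
  ∀ c ∈ C, Coalgebra.comul (R := k) c ∈
    LinearMap.range (TensorProduct.map C.subtype C.subtype)

/-- A simple (nonzero, minimal) subcoalgebra of `H`. -/
def IsSimpleSubcoalgebra (C : Submodule k H) : Prop :=
  IsSubcoalgebra k H C ∧ C ≠ ⊥ ∧
    ∀ D : Submodule k H, D ≤ C → IsSubcoalgebra k H D → D ≠ ⊥ → D = C

/-- A Hopf subalgebra of `H`: a subalgebra which is a subcoalgebra and is
stable under the antipode. -/
def IsHopfSubalgebra (K : Subalgebra k H) : Prop :=
  IsSubcoalgebra k H K.toSubmodule ∧ ∀ x ∈ K, HopfAlgebra.antipode (R := k) x ∈ K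

/-- `Λ` is the (two-sided) idempotent integral of the Hopf subalgebra `K`,
i.e. the integral normalized by `ε(Λ) = 1`. -/
def IsIdempotentIntegral (K : Subalgebra k H) (Λ : H) : Prop :=
  Λ ∈ K ∧ Coalgebra.counit (R := k) Λ = 1 ∧
    ∀ x ∈ K, x * Λ = Coalgebra.counit (R := k) x • Λ ∧
      Λ * x = Coalgebra.counit (R := k) x • Λ

/-- A cocommutative element of `H`; the cocommutative elements of `H` form
the character ring `C(H^*)`. -/
def IsCocomm (x : H) : Prop :=
  (TensorProduct.comm k H H) (Coalgebra.comul (R := k) x) = Coalgebra.comul (R := k) x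

/-- The character ring `C(H^*)`, i.e. the space of cocommutative elements of `H`,
as a `k`-subspace of `H`. -/
def charRing : Submodule k H :=
  LinearMap.ker ((TensorProduct.comm k H H).toLinearMap ∘ₗ Coalgebra.comul (R := k)
      - Coalgebra.comul (R := k))

/-- `d` is the irreducible character (of `H^*`) associated to the simple
subcoalgebra `C`: the unique cocommutative element of `C` whose counit is the
positive square root of `dim_k C`. -/
def IsCharacterOf (d : H) (C : Submodule k H) : Prop :=
  d ∈ C ∧ IsCocomm k H d ∧
    Coalgebra.counit (R := k) d = ((Nat.sqrt (Module.finrank k ↥C) : ℕ) : k)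

/-- The right coset `CK` of a subcoalgebra `C`, i.e. the subspace `C·K`. -/
def CKsub (K : Subalgebra k H) (C : Submodule k H) : Submodule k H :=
  C * K.toSubmodule

/-- The conjugate Hopf subalgebra `ᶜK` of `K` by a simple subcoalgebra `C`
(with associated irreducible character `c`): the span of all simple
subcoalgebras of `H` whose irreducible character `d` satisfies
`d·c·Λ_K = ε(d)·c·Λ_K`.  (The condition is stated for all cocommutative
elements of `C` resp. `D`; this is equivalent, since the cocommutative
elements of a simple subcoalgebra are exactly the scalar multiples of its
irreducible character.) -/
def conjK (K : Subalgebra k H) (Λ : H) (C : Submodule k H) : Submodule k H :=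
  sSup {D : Submodule k H | IsSimpleSubcoalgebra k H D ∧
    ∀ d ∈ D, IsCocomm k H d → ∀ c ∈ C, IsCocomm k H c →
      d * (c * Λ) = Coalgebra.counit (R := k) d • (c * Λ)}

/-- A complete irredundant system of representatives (by simple subcoalgebras)
of the double cosets `L\H/K`.  (Taking `L = ⊥` gives a system of
representatives of the right cosets `H/K`.) -/
def IsDoubleCosetReps (L K : Subalgebra k H) {ι : Type} (rep : ι → Submodule k H) : Prop :=
  (∀ i, IsSimpleSubcoalgebra k H (rep i)) ∧
  (∀ i j, L.toSubmodule * rep i * K.toSubmodule = L.toSubmodule * rep j * K.toSubmodule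
      → i = j) ∧
  (∀ C : Submodule k H, IsSimpleSubcoalgebra k H C →
      ∃ i, C ≤ L.toSubmodule * rep i * K.toSubmodule)

section Ind

variable (K : Subalgebra k H) (M : Type v) [AddCommGroup M] [Module k M]
  [Module ↥K M] [IsScalarTower k ↥K M]

/-- The relations defining the induced module `H ⊗_K M` as a quotient of
`H ⊗_k M`: the `H`-submodule generated by the elements `a ⊗ m - 1 ⊗ a·m`
for `a ∈ K` (equivalently, spanned by all `h·a ⊗ m - h ⊗ a·m`). -/
def indRel : Submodule H (H ⊗[k] M) :=
  Submodule.span H {z | ∃ (a : ↥K) (m : M),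
    z = (a : H) ⊗ₜ[k] m - (1 : H) ⊗ₜ[k] (a • m)}

/-- The induced module `M↑_K^H = H ⊗_K M`, a left `H`-module. -/
abbrev Ind := (H ⊗[k] M) ⧸ indRel k H K M

variable (C : Submodule k H)

/-- The underlying space `CK ⊗_k M` of which the conjugate module `ᶜM` is a
quotient. -/
def CKM : Type _ := ↥(CKsub k H K C) ⊗[k] M

instance : AddCommGroup (CKM k H K M C) :=
  inferInstanceAs (AddCommGroup (↥(CKsub k H K C) ⊗[k] M))

instance : Module k (CKM k H K M C) :=
  inferInstanceAs (Module k (↥(CKsub k H K C) ⊗[k] M))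

/-- The pure tensor `x ⊗ m` as an element of `CK ⊗_k M`. -/
def ckmk (x : ↥(CKsub k H K C)) (m : M) : CKM k H K M C := x ⊗ₜ[k] m

/-- The relations defining the conjugate module `ᶜM = CK ⊗_K M` as a quotient
of `CK ⊗_k M`: `x·a ⊗ m - x ⊗ a·m` for `a ∈ K`. -/
def conjRel : Submodule k (CKM k H K M C) :=
  Submodule.span k {z | ∃ (x : ↥(CKsub k H K C)) (a : ↥K) (m : M)
    (hxa : (x : H) * (a : H) ∈ CKsub k H K C),
    z = ckmk k H K M C ⟨(x : H) * (a : H), hxa⟩ m - ckmk k H K M C x (a • m)}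

/-- The conjugate module `ᶜM := CK ⊗_K M`. -/
abbrev ConjM := CKM k H K M C ⧸ conjRel k H K M C

/-- The canonical copy of the conjugate module `ᶜM = CK ⊗_K M` inside
`H ⊗_K M` (the image of `CK ⊗_K M` under multiplication; this is indeed a
copy of `ᶜM` since `H` is a free right `K`-module and `CK` is one of the
coset summands). -/
def conjMsub : Submodule k (Ind k H K M) :=
  Submodule.span k {z | ∃ (x : H) (_ : x ∈ CKsub k H K C) (m : M),
    z = Submodule.Quotient.mk (x ⊗ₜ[k] m)}

end Ind

section Comp

variable (L K : Subalgebra k H) (Λ : H) (C : Submodule k H)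
variable (M : Type v) [AddCommGroup M] [Module k M] [Module ↥K M] [IsScalarTower k ↥K M]

/-- The underlying space `L ⊗_k (CK ⊗_k M)`. -/
def LCM : Type _ := ↥L ⊗[k] CKM k H K M C

instance : AddCommGroup (LCM k H L K C M) :=
  inferInstanceAs (AddCommGroup (↥L ⊗[k] CKM k H K M C))

instance : Module k (LCM k H L K C M) :=
  inferInstanceAs (Module k (↥L ⊗[k] CKM k H K M C))

/-- The pure tensor `l ⊗ w` as an element of `L ⊗_k (CK ⊗_k M)`. -/
def lcmk (l : ↥L) (w : CKM k H K M C) : LCM k H L K C M := l ⊗ₜ[k] w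

/-- The relations defining `L ⊗_{L ∩ ᶜK} ᶜM` as a quotient of
`L ⊗_k (CK ⊗_k M)`: the balancedness relations over `L ∩ ᶜK` (first set),
together with (the image of) the relations defining `ᶜM = CK ⊗_K M`
(second set). -/
def compRel : Submodule k (LCM k H L K C M) :=
  Submodule.span k
    ({z | ∃ (l : ↥L) (a : H) (haL : a ∈ L) (_ : a ∈ conjK k H K Λ C)
        (x : ↥(CKsub k H K C)) (m : M) (hax : a * (x : H) ∈ CKsub k H K C),
        z = lcmk k H L K C M ⟨(l : H) * a, mul_mem l.2 haL⟩ (ckmk k H K M C x m)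
          - lcmk k H L K C M l (ckmk k H K M C ⟨a * (x : H), hax⟩ m)} ∪
     {z | ∃ (l : ↥L) (x : ↥(CKsub k H K C)) (a : ↥K) (m : M)
        (hxa : (x : H) * (a : H) ∈ CKsub k H K C),
        z = lcmk k H L K C M l (ckmk k H K M C ⟨(x : H) * (a : H), hxa⟩ m)
          - lcmk k H L K C M l (ckmk k H K M C x (a • m))})

/-- The module `L ⊗_{L ∩ ᶜK} ᶜM` (a left `L`-module via multiplication on the
first tensor factor). -/
abbrev Comp := LCM k H L K C M ⧸ compRel k H L K Λ C M

end Comp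

open DirectSum

section Mackey

variable (L K : Subalgebra k H) (Λ : H)

/-- The Mackey isomorphism property for the pair `(L, K)` at the `K`-module
`M`: for any system of double coset representatives, the left-multiplication
map `⊕_C L ⊗_{L ∩ ᶜK} ᶜM → M↑_K^H↓_L^H`, `l ⊗ v ↦ l·v`, is an isomorphism of
`L`-modules.  (A `k`-linear map satisfying the displayed formula on the
spanning elements is automatically `L`-equivariant for the evident
`L`-actions, so this property is stated for `k`-linear maps.) -/
def MackeyAt (M : Type v) [AddCommGroup M] [Module k M] [Module ↥K M]
    [IsScalarTower k ↥K M] [Module.Finite k M] : Prop :=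
  ∀ (ι : Type) [DecidableEq ι] (rep : ι → Submodule k H),
    IsDoubleCosetReps k H L K rep →
    ∃ π : (⨁ i : ι, Comp k H L K Λ (rep i) M) →ₗ[k] Ind k H K M,
      Function.Bijective π ∧
      ∀ (i : ι) (l : ↥L) (x : ↥(CKsub k H K (rep i))) (m : M),
        π (DirectSum.of (fun i => Comp k H L K Λ (rep i) M) i
            (Submodule.Quotient.mk (lcmk k H L K (rep i) M l (ckmk k H K M (rep i) x m)))) =
          Submodule.Quotient.mk (((l : H) * (x : H)) ⊗ₜ[k] m)

/-- `(L, K)` is a Mackey pair of Hopf subalgebras of `H` (here `Λ` is the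
idempotent integral of `K`): for every finite-dimensional `K`-module `M` the
left-multiplication homomorphism `π_M` is an isomorphism. -/
def IsMackeyPair : Prop :=
  ∀ (M : Type v) [AddCommGroup M] [Module k M] [Module ↥K M]
    [IsScalarTower k ↥K M] [Module.Finite k M], MackeyAt k H L K Λ M

end Mackey


end

end MackeyPaper

namespace MackeyPaper

noncomputable section

section Comatrix

open Coalgebra HopfAlgebra

variable {k H : Type} [Field k] [Ring H] [HopfAlgebra k H]

/-- The operator `h ↦ h₁ f(h₂)`. -/
def rslice (f : H →ₗ[k] k) : H →ₗ[k] H :=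
  (TensorProduct.rid k H).toLinearMap ∘ₗ f.lTensor H ∘ₗ comul

/-- The operator `h ↦ f(h₁) h₂`. -/
def lslice (f : H →ₗ[k] k) : H →ₗ[k] H :=
  (TensorProduct.lid k H).toLinearMap ∘ₗ f.rTensor H ∘ₗ comul

variable (k) in
/-- A square matrix over `H` with `Δ(mᵢⱼ) = ∑ mᵢₗ ⊗ mₗⱼ` and `ε(mᵢⱼ) = δᵢⱼ`. -/
structure IsComatrix {ι : Type} [Fintype ι] [DecidableEq ι] (m : Matrix ι ι H) : Prop where
  comul_apply (i j : ι) : comul (R := k) (m i j) = ∑ l, m i l ⊗ₜ[k] m l j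
  counit_apply (i j : ι) : counit (R := k) (m i j) = if i = j then 1 else 0

namespace IsComatrix

variable {ι : Type} [Fintype ι] [DecidableEq ι] {m : Matrix ι ι H} (hm : IsComatrix k m)

include hm

theorem rslice_apply (f : H →ₗ[k] k) (i j : ι) : rslice f (m i j) = ∑ l, f (m l j) • m i l := by
  simp [rslice, hm.comul_apply]

theorem lslice_apply (f : H →ₗ[k] k) (i j : ι) : lslice f (m i j) = ∑ l, f (m i l) • m l j := by
  simp [lslice, hm.comul_apply]

theorem antipode_mul : m.map (antipode k) * m = 1 := by
  ext i j
  have h := mul_antipode_rTensor_comul_apply (R := k) (m i j)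
  simp only [hm.comul_apply, hm.counit_apply, map_sum, LinearMap.rTensor_tmul,
    LinearMap.mul'_apply] at h
  rw [Matrix.mul_apply, Matrix.one_apply]
  simp only [Matrix.map_apply, h]
  split_ifs <;> simp

theorem mul_antipode : m * m.map (antipode k) = 1 := by
  ext i j
  have h := mul_antipode_lTensor_comul_apply (R := k) (m i j)
  simp only [hm.comul_apply, hm.counit_apply, map_sum, LinearMap.lTensor_tmul,
    LinearMap.mul'_apply] at h
  rw [Matrix.mul_apply, Matrix.one_apply]
  simp only [Matrix.map_apply, h]
  split_ifs <;> simp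

theorem sum_antipode_mul (i j : ι) :
    ∑ l, antipode k (m i l) * m l j = if i = j then 1 else 0 := by
  simpa [Matrix.mul_apply, Matrix.one_apply] using congr_fun₂ hm.antipode_mul i j

theorem sum_mul_antipode (i j : ι) :
    ∑ l, m i l * antipode k (m l j) = if i = j then 1 else 0 := by
  simpa [Matrix.mul_apply, Matrix.one_apply] using congr_fun₂ hm.mul_antipode i j

theorem comul_antipode (i j : ι) :
    comul (R := k) (antipode k (m i j)) =
      ∑ l, antipode k (m l j) ⊗ₜ[k] antipode k (m i l) := by
  let Δ : H →ₐ[k] H ⊗[k] H := Bialgebra.comulAlgHom k H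
  let A : Matrix ι ι (H ⊗[k] H) := m.map Δ
  let X : Matrix ι ι (H ⊗[k] H) := (m.map (antipode k)).map Δ
  let Y : Matrix ι ι (H ⊗[k] H) :=
    .of fun i j => ∑ l, antipode k (m l j) ⊗ₜ[k] antipode k (m i l)
  have hXA : X * A = 1 := by
    rw [← Matrix.map_mul, hm.antipode_mul]
    exact Matrix.map_one _ (map_zero Δ) (map_one Δ)
  have hAY : A * Y = 1 := by
    ext i q
    simp only [A, Y, Matrix.mul_apply, Matrix.map_apply, Matrix.of_apply, Δ,
      Bialgebra.comulAlgHom_apply, hm.comul_apply, Finset.sum_mul_sum,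
      Algebra.TensorProduct.tmul_mul_tmul]
    rw [Finset.sum_comm]
    simp_rw [Finset.sum_comm (s := Finset.univ) (t := Finset.univ) (f := fun j p =>
      (_ : H) ⊗ₜ[k] (m _ j * antipode k (m j p))), ← TensorProduct.tmul_sum, hm.sum_mul_antipode]
    simp only [TensorProduct.tmul_ite, Finset.sum_ite_eq,
      Finset.mem_univ, if_true, ← TensorProduct.sum_tmul, hm.sum_mul_antipode]
    rw [Matrix.one_apply]
    split_ifs <;> simp [Algebra.TensorProduct.one_def]
  have := congr_fun₂ (left_inv_eq_right_inv hXA hAY : X = Y) i j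
  simpa [X, Y, Δ] using this

end IsComatrix

/-- If `Δ(b_q) = ∑ n_{qp} ⊗ b_p` for a family with dual functionals, then `n` is a comatrix. -/
theorem isComatrix_of_comul {ι : Type} [Fintype ι] [DecidableEq ι] {b : ι → H}
    {β : ι → H →ₗ[k] k} (hβ : ∀ i j, β i (b j) = if j = i then 1 else 0) {n : Matrix ι ι H}
    (hn : ∀ q, comul (R := k) (b q) = ∑ p, n q p ⊗ₜ[k] b p) : IsComatrix k n := by
  have slice (z : ι → H ⊗[k] H) (p : ι) :
      (TensorProduct.rid k _).toLinearMap ((β p).lTensor (H ⊗[k] H) (∑ l, z l ⊗ₜ[k] b l)) = z p := by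
    simp [hβ]
  refine ⟨fun i j => ?_, fun i j => ?_⟩
  · have h := coassoc_apply (R := k) (b i)
    have h1 : (TensorProduct.assoc k H H H).symm ((comul (R := k)).lTensor H (comul (R := k) (b i)))
        = ∑ l, (∑ p, n i p ⊗ₜ[k] n p l) ⊗ₜ[k] b l := by
      simp only [hn, map_sum, LinearMap.lTensor_tmul, TensorProduct.tmul_sum,
        TensorProduct.assoc_symm_tmul, TensorProduct.sum_tmul]
      exact Finset.sum_comm
    rw [← h, LinearEquiv.symm_apply_apply, hn] at h1
    simp only [map_sum, LinearMap.rTensor_tmul] at h1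
    rw [← slice (fun l => comul (n i l)) j, h1, slice]
  · have h := rTensor_counit_comul (R := k) (b i)
    rw [hn] at h
    have h2 := congr_arg (fun z => (β j) (TensorProduct.lid k H z)) h
    simp [hβ] at h2
    exact h2

theorem IsSubcoalgebra.exists_basis_comatrix [FiniteDimensional k H] {E : Submodule k H}
    (hE : IsSubcoalgebra k H E) :
    ∃ (d : ℕ) (b : Module.Basis (Fin d) k E) (β : Fin d → H →ₗ[k] k)
      (n : Matrix (Fin d) (Fin d) H), (∀ i (x : E), β i x = b.repr x i) ∧ IsComatrix k n ∧
      (∀ q, comul (R := k) (b q : H) = ∑ p, n q p ⊗ₜ[k] (b p : H)) ∧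
      (∀ q p, n q p ∈ E) ∧ ∀ q, (b q : H) = ∑ p, counit (R := k) (b p : H) • n q p := by
  let b := Module.finBasis k E
  choose β hβ using fun i => LinearMap.exists_extend (b.coord i)
  have hβ' (i) (x : E) : β i x = b.repr x i := LinearMap.congr_fun (hβ i) x
  have key (z : H ⊗[k] H) (hz : z ∈ LinearMap.range (TensorProduct.map E.subtype E.subtype)) :
      z = ∑ p, (TensorProduct.rid k H ((β p).lTensor H z)) ⊗ₜ[k] (b p : H) ∧
      ∀ p, TensorProduct.rid k H ((β p).lTensor H z) ∈ E := by
    obtain ⟨w, rfl⟩ := hz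
    induction w with
    | zero => simp
    | add x y hx hy =>
      refine ⟨?_, fun p => ?_⟩
      · conv_lhs => rw [map_add, hx.1, hy.1]
        simp only [map_add, TensorProduct.add_tmul, Finset.sum_add_distrib]
      · simp only [map_add]
        exact add_mem (hx.2 p) (hy.2 p)
    | tmul x y =>
      refine ⟨?_, fun p => ?_⟩
      · simp only [TensorProduct.map_tmul, LinearMap.lTensor_tmul, TensorProduct.rid_tmul,
          Submodule.subtype_apply, hβ', TensorProduct.smul_tmul, ← TensorProduct.tmul_sum]
        congr 1
        simpa only [Submodule.coe_sum, Submodule.coe_smul] using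
          (congr_arg Subtype.val (b.sum_repr y)).symm
      · simpa using E.smul_mem _ x.2
  have hn (q) := (key _ (hE _ (b q).2)).1
  refine ⟨_, b, β, .of fun q p => rslice (β p) (b q), hβ', ?_, hn,
    fun q p => (key _ (hE _ (b q).2)).2 p, fun q => ?_⟩
  · refine isComatrix_of_comul (β := β) (b := fun i => (b i : H)) (fun i j => ?_) hn
    rw [hβ', b.repr_self, Finsupp.single_apply]
  · have h := lTensor_counit_comul (R := k) (b q : H)
    have h2 := congr_arg (TensorProduct.rid k H) h
    rw [hn] at h2
    simp only [map_sum, LinearMap.lTensor_tmul, TensorProduct.rid_tmul, one_smul] at h2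
    exact h2.symm

theorem IsSubcoalgebra.exists_comatrix [FiniteDimensional k H] {E : Submodule k H}
    (hE : IsSubcoalgebra k H E) :
    ∃ (d : ℕ) (n : Matrix (Fin d) (Fin d) H), IsComatrix k n ∧ (∀ i j, n i j ∈ E) ∧
      E = Submodule.span k (Set.range (Function.uncurry n)) := by
  obtain ⟨d, b, β, n, -, hn, -, hnE, hb⟩ := hE.exists_basis_comatrix
  refine ⟨d, n, hn, hnE, le_antisymm (fun x hx => ?_) (Submodule.span_le.2 ?_)⟩
  · have := b.sum_repr ⟨x, hx⟩
    have hx' : x = ∑ i, b.repr ⟨x, hx⟩ i • (b i : H) := by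
      simpa only [Submodule.coe_sum, Submodule.coe_smul] using (congr_arg Subtype.val this).symm
    rw [hx']
    refine sum_mem fun i _ => Submodule.smul_mem _ _ ?_
    rw [hb]
    exact sum_mem fun p _ => Submodule.smul_mem _ _ (Submodule.subset_span ⟨(i, p), rfl⟩)
  · rintro _ ⟨⟨i, j⟩, rfl⟩
    exact hnE i j

/-- Linear maps agree on a subcoalgebra as soon as they agree on entries of comatrices. -/
theorem IsSubcoalgebra.eqOn_of_comatrix [FiniteDimensional k H] {E : Submodule k H}
    (hE : IsSubcoalgebra k H E) {M : Type*} [AddCommGroup M] [Module k M] {f g : H →ₗ[k] M}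
    (h : ∀ (d : ℕ) (m : Matrix (Fin d) (Fin d) H), IsComatrix k m → (∀ i j, m i j ∈ E) →
      ∀ i j, f (m i j) = g (m i j)) {x : H} (hx : x ∈ E) : f x = g x := by
  obtain ⟨d, n, hn, hnE, hE'⟩ := hE.exists_comatrix
  rw [hE'] at hx
  refine LinearMap.eqOn_span' (s := Set.range (Function.uncurry n)) ?_ hx
  rintro _ ⟨⟨i, j⟩, rfl⟩
  exact h d n hn hnE i j

theorem isSubcoalgebra_top : IsSubcoalgebra k H ⊤ := fun c _ => by
  have : Function.Surjective
      (TensorProduct.map (⊤ : Submodule k H).subtype (⊤ : Submodule k H).subtype) :=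
    TensorProduct.map_surjective (fun x => ⟨⟨x, trivial⟩, rfl⟩) (fun x => ⟨⟨x, trivial⟩, rfl⟩)
  exact this _

theorem linearMap_ext_comatrix [FiniteDimensional k H] {M : Type*} [AddCommGroup M] [Module k M]
    {f g : H →ₗ[k] M} (h : ∀ (d : ℕ) (m : Matrix (Fin d) (Fin d) H), IsComatrix k m →
      ∀ i j, f (m i j) = g (m i j)) : f = g :=
  LinearMap.ext fun _ => isSubcoalgebra_top.eqOn_of_comatrix (fun d m hm _ => h d m hm) trivial

end Comatrix

section Slices

open Coalgebra HopfAlgebra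

variable {k H : Type} [Field k] [Ring H] [HopfAlgebra k H]

/-- The map `a ⊗ b ↦ f(b) a`. -/
def evalR (f : H →ₗ[k] k) : H ⊗[k] H →ₗ[k] H :=
  (TensorProduct.rid k H).toLinearMap ∘ₗ f.lTensor H

/-- The map `a ⊗ b ↦ f(a) b`. -/
def evalL (f : H →ₗ[k] k) : H ⊗[k] H →ₗ[k] H :=
  (TensorProduct.lid k H).toLinearMap ∘ₗ f.rTensor H

@[simp] theorem evalR_tmul (f : H →ₗ[k] k) (a b : H) : evalR f (a ⊗ₜ[k] b) = f b • a := by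
  simp [evalR]

@[simp] theorem evalL_tmul (f : H →ₗ[k] k) (a b : H) : evalL f (a ⊗ₜ[k] b) = f a • b := by
  simp [evalL]

theorem evalR_comul (f : H →ₗ[k] k) (h : H) : evalR f (comul h) = rslice f h := rfl

theorem evalL_comul (f : H →ₗ[k] k) (h : H) : evalL f (comul h) = lslice f h := rfl

theorem evalR_mul_tmul (f : H →ₗ[k] k) (z : H ⊗[k] H) (a b : H) :
    evalR f (z * a ⊗ₜ[k] b) = evalR (f ∘ₗ LinearMap.mulRight k b) z * a := by
  induction z with
  | zero => simp
  | add x y hx hy => simp only [add_mul, map_add, hx, hy]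
  | tmul x y => simp

theorem evalR_tmul_mul (f : H →ₗ[k] k) (z : H ⊗[k] H) (a b : H) :
    evalR f (a ⊗ₜ[k] b * z) = a * evalR (f ∘ₗ LinearMap.mulLeft k b) z := by
  induction z with
  | zero => simp
  | add x y hx hy => simp only [mul_add, map_add, hx, hy]
  | tmul x y => simp

theorem evalL_mul_tmul (f : H →ₗ[k] k) (z : H ⊗[k] H) (a b : H) :
    evalL f (z * a ⊗ₜ[k] b) = evalL (f ∘ₗ LinearMap.mulRight k a) z * b := by
  induction z with
  | zero => simp
  | add x y hx hy => simp only [add_mul, map_add, hx, hy]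
  | tmul x y => simp

theorem apply_rslice (f g : H →ₗ[k] k) (h : H) : f (rslice g h) = g (lslice f h) := by
  rw [← evalR_comul, ← evalL_comul]
  induction comul (R := k) h with
  | zero => simp
  | add x y hx hy => simp only [map_add, hx, hy]
  | tmul x y => simp [mul_comm]

theorem rslice_counit : rslice (counit (R := k) (A := H)) = LinearMap.id := by
  ext h
  simp [rslice]

theorem lslice_counit : lslice (counit (R := k) (A := H)) = LinearMap.id := by
  ext h
  simp [lslice]

theorem counit_rslice (f : H →ₗ[k] k) (h : H) : counit (R := k) (rslice f h) = f h := by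
  rw [apply_rslice, lslice_counit, LinearMap.id_apply]

theorem counit_lslice (f : H →ₗ[k] k) (h : H) : counit (R := k) (lslice f h) = f h := by
  rw [← apply_rslice, rslice_counit, LinearMap.id_apply]

variable [FiniteDimensional k H]

theorem rslice_comp_rslice (f g : H →ₗ[k] k) :
    rslice g ∘ₗ rslice f = rslice (g ∘ₗ rslice f) := by
  refine linearMap_ext_comatrix fun d m hm i j => ?_
  simp only [LinearMap.comp_apply, hm.rslice_apply, map_sum, map_smul, Finset.smul_sum,
    Finset.sum_smul, smul_smul, smul_eq_mul]
  exact Finset.sum_comm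

theorem rslice_comp_lslice (f g : H →ₗ[k] k) : rslice g ∘ₗ lslice f = lslice f ∘ₗ rslice g := by
  refine linearMap_ext_comatrix fun d m hm i j => ?_
  simp only [LinearMap.comp_apply, hm.lslice_apply, hm.rslice_apply, map_sum, map_smul,
    Finset.smul_sum, smul_smul]
  rw [Finset.sum_comm]
  simp only [mul_comm]

theorem comul_comp_lslice (f : H →ₗ[k] k) :
    comul ∘ₗ lslice f = (lslice f).rTensor H ∘ₗ comul := by
  refine linearMap_ext_comatrix fun d m hm i j => ?_
  simp only [LinearMap.comp_apply, hm.lslice_apply, hm.comul_apply, map_sum, map_smul,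
    Finset.smul_sum, LinearMap.rTensor_tmul, TensorProduct.sum_tmul, TensorProduct.smul_tmul']
  exact Finset.sum_comm

theorem comul_comp_antipode : comul ∘ₗ antipode k (A := H) =
    TensorProduct.map (antipode k) (antipode k) ∘ₗ (TensorProduct.comm k H H).toLinearMap ∘ₗ
      comul := by
  refine linearMap_ext_comatrix fun d m hm i j => ?_
  simp [hm.comul_apply, hm.comul_antipode]

theorem comul_antipode_antipode (h : H) : comul (R := k) (antipode k (antipode k h)) =
    TensorProduct.map (antipode k ∘ₗ antipode k) (antipode k ∘ₗ antipode k) (comul h) := by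
  have hS (x : H) : comul (R := k) (antipode k x) = _ := LinearMap.congr_fun comul_comp_antipode x
  simp only [hS, LinearMap.comp_apply, LinearEquiv.coe_coe]
  induction comul (R := k) h with
  | zero => simp
  | add x y hx hy => simp only [map_add, hx, hy]
  | tmul x y => simp

theorem antipode_lslice (f : H →ₗ[k] k) (h : H) :
    antipode k (lslice (f ∘ₗ antipode k) h) = rslice f (antipode k h) := by
  have hS (x : H) : comul (R := k) (antipode k x) = _ := LinearMap.congr_fun comul_comp_antipode x
  rw [← evalL_comul, ← evalR_comul, hS]
  simp only [LinearMap.comp_apply, LinearEquiv.coe_coe]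
  induction comul (R := k) h with
  | zero => simp
  | add x y hx hy => simp only [map_add, hx, hy]
  | tmul x y => simp

end Slices

section Integral

open Coalgebra HopfAlgebra

variable {k H : Type} [Field k] [Ring H] [HopfAlgebra k H]

variable (k) in
/-- A two-sided integral in `H` of counit `1`. -/
structure IsNormInt (Λ : H) : Prop where
  counit_eq : counit (R := k) Λ = 1
  mul_left (h : H) : h * Λ = counit (R := k) h • Λ
  mul_right (h : H) : Λ * h = counit (R := k) h • Λ

/-- A left integral on `H`: `h₁ f(h₂) = f(h) 1`. -/
def IsLeftInt (f : H →ₗ[k] k) : Prop := ∀ h, rslice f h = f h • (1 : H)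

/-- A right integral on `H`: `f(h₁) h₂ = f(h) 1`. -/
def IsRightInt (f : H →ₗ[k] k) : Prop := ∀ h, lslice f h = f h • (1 : H)

variable (k H) in
theorem exists_isNormInt [IsSemisimpleRing H] : ∃ Λ : H, IsNormInt k Λ := by
  let I : Ideal H := RingHom.ker (Bialgebra.counitAlgHom k H)
  have memI (x : H) : x ∈ I ↔ counit (R := k) x = 0 := Iff.rfl
  obtain ⟨J, hJ⟩ := exists_isCompl I
  have h1 : (1 : H) ∈ I ⊔ J := by rw [hJ.sup_eq_top]; trivial
  obtain ⟨κ, hκ, Λ, hΛ, h1⟩ := Submodule.mem_sup.1 h1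
  have hcΛ : counit (R := k) Λ = 1 := by
    have := congr_arg (counit (R := k)) h1
    simpa [(memI κ).1 hκ] using this
  have hl (h : H) : h * Λ = counit (R := k) h • Λ := by
    have hd : (h - algebraMap k H (counit (R := k) h)) * Λ ∈ I ⊓ J := by
      refine ⟨(memI _).2 ?_, J.smul_mem _ hΛ⟩
      simp [Bialgebra.counit_mul]
    rw [hJ.inf_eq_bot, Submodule.mem_bot, sub_mul, sub_eq_zero] at hd
    rw [hd, Algebra.smul_def]
  refine ⟨Λ, hcΛ, hl, fun h => sub_eq_zero.1 ?_⟩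
  set t := Λ * h - counit (R := k) h • Λ with ht
  have hlt (x : H) : x * t = counit (R := k) x • t := by
    rw [ht, mul_sub, ← mul_assoc, hl, mul_smul_comm, hl, smul_sub, smul_mul_assoc, smul_comm]
  have hct : counit (R := k) t = 0 := by simp [ht, hcΛ]
  obtain ⟨N, hN⟩ := exists_isCompl (Ideal.span {t} : Ideal H)
  have h1 : (1 : H) ∈ Ideal.span {t} ⊔ N := by rw [hN.sup_eq_top]; trivial
  obtain ⟨a, ha, q, hq, h1⟩ := Submodule.mem_sup.1 h1
  obtain ⟨s, rfl⟩ := Ideal.mem_span_singleton'.1 ha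
  have htq : t = t * q := by
    have := congr_arg (t * ·) h1
    simp only [mul_add, mul_one, hlt s, mul_smul_comm, hlt t, hct, zero_smul, smul_zero,
      zero_add] at this
    exact this.symm
  have : t ∈ Ideal.span {t} ⊓ N :=
    ⟨Ideal.mem_span_singleton_self t, by rw [htq]; exact N.smul_mem _ hq⟩
  rwa [hN.inf_eq_bot, Submodule.mem_bot] at this

variable (k H) in
/-- The functional `h ↦ Tr(x ↦ h S²(x))`. -/
def traceInt : H →ₗ[k] k :=
  LinearMap.trace k H ∘ₗ LinearMap.lcomp k H (antipode k ∘ₗ antipode k) ∘ₗ LinearMap.mul k H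

theorem traceInt_apply (h : H) :
    traceInt k H h = LinearMap.trace k H (LinearMap.mulLeft k h ∘ₗ antipode k ∘ₗ antipode k) :=
  rfl

theorem antipode_antipode_mul (x y : H) : antipode k (antipode k (x * y)) =
    antipode k (antipode k x) * antipode k (antipode k y) := by
  rw [antipode_mul_antidistrib, antipode_mul_antidistrib]

theorem traceInt_mul (x y : H) :
    traceInt k H (x * y) = traceInt k H (y * antipode k (antipode k x)) := by
  rw [traceInt_apply, traceInt_apply]
  have h1 : LinearMap.mulLeft k (x * y) ∘ₗ antipode k ∘ₗ antipode k =
      LinearMap.mulLeft k x * (LinearMap.mulLeft k y ∘ₗ antipode k ∘ₗ antipode k) := by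
    ext z; simp
  have h2 : LinearMap.mulLeft k (y * antipode k (antipode k x)) ∘ₗ antipode k ∘ₗ antipode k =
      (LinearMap.mulLeft k y ∘ₗ antipode k ∘ₗ antipode k) * LinearMap.mulLeft k x := by
    ext z; simp [antipode_antipode_mul]
  rw [h1, h2, LinearMap.trace_mul_comm]

theorem traceInt_antipode_antipode (x : H) :
    traceInt k H (antipode k (antipode k x)) = traceInt k H x := by
  simpa using (traceInt_mul x (1 : H)).symm

variable [FiniteDimensional k H]

theorem isLeftInt_traceInt : IsLeftInt (traceInt k H) := by
  intro h
  obtain ⟨d, b₀, β₀, n, hβ₀, hn, hb₀, -, -⟩ :=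
    (isSubcoalgebra_top (k := k) (H := H)).exists_basis_comatrix
  let b : Module.Basis (Fin d) k H := b₀.map Submodule.topEquiv
  have hb (q) : comul (R := k) (b q) = ∑ p, n q p ⊗ₜ[k] b p := hb₀ q
  let s2 : H →ₗ[k] H := antipode k ∘ₗ antipode k
  let W (r q : Fin d) : k := b.coord r (h * s2 (b q))
  let X (s p : Fin d) : H := rslice (b.coord s ∘ₗ LinearMap.mulRight k (s2 (b p))) h
  have hX (s q) : ∑ p, X s p * s2 (n q p) = ∑ r, W r q • n r s := by
    have h1 : rslice (b.coord s) (h * s2 (b q)) = ∑ p, X s p * s2 (n q p) := by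
      rw [← evalR_comul, Bialgebra.comul_mul]
      simp only [s2, LinearMap.comp_apply, comul_antipode_antipode, hb, map_sum,
        TensorProduct.map_tmul, Finset.mul_sum, evalR_mul_tmul]
      rfl
    rw [← h1]
    conv_lhs => rw [← b.sum_repr (h * s2 (b q))]
    simp only [map_sum, map_smul, ← evalR_comul, hb, evalR_tmul]
    refine Finset.sum_congr rfl fun r _ => ?_
    simp [W, Finsupp.single_apply]
  have hXst (s t) : X s t = ∑ r, ∑ q, W r q • (n r s * antipode k (n t q)) := by
    calc X s t = ∑ p, X s p * antipode k (∑ q, n t q * antipode k (n q p)) := by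
          simp [hn.sum_mul_antipode, apply_ite (antipode k (A := H))]
      _ = ∑ q, (∑ p, X s p * s2 (n q p)) * antipode k (n t q) := by
          simp only [map_sum, antipode_mul_antidistrib, Finset.mul_sum, Finset.sum_mul, s2,
            LinearMap.comp_apply, mul_assoc]
          exact Finset.sum_comm
      _ = _ := by
          simp only [hX, Finset.sum_mul, smul_mul_assoc]
          exact Finset.sum_comm
  have htr (x : H) : traceInt k H x = ∑ s, b.coord s (x * s2 (b s)) := by
    rw [traceInt_apply, LinearMap.trace_eq_matrix_trace k b, Matrix.trace]
    simp [LinearMap.toMatrix_apply, s2]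
  have hsl : rslice (traceInt k H) h = ∑ s, X s s := by
    rw [← evalR_comul]
    simp only [X, ← evalR_comul]
    induction comul (R := k) h with
    | zero => simp
    | add x y hx hy => simp only [map_add, hx, hy, Finset.sum_add_distrib]
    | tmul x y => simp [htr, Finset.sum_smul]
  have hd (r q) : ∑ s, W r q • (n r s * antipode k (n s q)) = if r = q then W r q • 1 else 0 := by
    rw [← Finset.smul_sum, hn.sum_mul_antipode]
    split_ifs <;> simp
  rw [hsl]
  simp only [hXst]
  rw [Finset.sum_comm]
  simp_rw [Finset.sum_comm (s := Finset.univ) (t := Finset.univ) (f := fun s q =>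
      W _ q • (n _ s * antipode k (n s q))), hd]
  simp [htr, W, Finset.sum_smul]

end Integral

section IntegralTheory

open Coalgebra HopfAlgebra

variable {k H : Type} [Field k] [Ring H] [HopfAlgebra k H] [FiniteDimensional k H]

namespace IsNormInt

variable {Λ : H} (hΛ : IsNormInt k Λ)

include hΛ

theorem traceInt_eq_one : traceInt k H Λ = 1 := by
  have h : LinearMap.mulLeft k Λ ∘ₗ antipode k ∘ₗ antipode k =
      (counit (R := k) (A := H)).smulRight Λ := by
    ext x
    simp [hΛ.mul_right]
  rw [traceInt_apply, h, LinearMap.trace_smulRight, hΛ.counit_eq]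

theorem one_tmul_mul_comul (h : H) :
    (1 : H) ⊗ₜ[k] h * comul Λ = antipode k h ⊗ₜ[k] (1 : H) * comul Λ := by
  let f : H →ₗ[k] H ⊗[k] H :=
    LinearMap.mulRight k (comul Λ) ∘ₗ TensorProduct.mk k H H 1
  let g : H →ₗ[k] H ⊗[k] H :=
    LinearMap.mulRight k (comul Λ) ∘ₗ (TensorProduct.mk k H H).flip 1 ∘ₗ antipode k
  suffices f = g from LinearMap.congr_fun this h
  refine linearMap_ext_comatrix fun d m hm p j => ?_
  have key (i j) : (∑ l, m i l ⊗ₜ[k] m l j) * comul (R := k) Λ =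
      if i = j then comul (R := k) Λ else 0 := by
    rw [← hm.comul_apply, ← Bialgebra.comul_mul, hΛ.mul_left, map_smul, hm.counit_apply]
    split_ifs <;> simp
  have h1 : ∑ i, antipode k (m p i) ⊗ₜ[k] (1 : H) * ((∑ l, m i l ⊗ₜ[k] m l j) * comul (R := k) Λ)
      = antipode k (m p j) ⊗ₜ[k] (1 : H) * comul (R := k) Λ := by
    simp [key]
  have h2 : ∑ i, antipode k (m p i) ⊗ₜ[k] (1 : H) * ((∑ l, m i l ⊗ₜ[k] m l j) * comul (R := k) Λ)
      = (1 : H) ⊗ₜ[k] m p j * comul (R := k) Λ := by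
    simp only [← mul_assoc, ← Finset.sum_mul, Finset.mul_sum,
      Algebra.TensorProduct.tmul_mul_tmul, one_mul]
    rw [Finset.sum_comm]
    simp only [← TensorProduct.sum_tmul, hm.sum_antipode_mul, TensorProduct.ite_tmul,
      Finset.sum_ite_eq, Finset.mem_univ, if_true]
  simp [f, g, ← h1, h2]

theorem comul_mul_tmul_one (h : H) :
    comul Λ * h ⊗ₜ[k] (1 : H) = comul Λ * (1 : H) ⊗ₜ[k] antipode k h := by
  let f : H →ₗ[k] H ⊗[k] H :=
    LinearMap.mulLeft k (comul Λ) ∘ₗ (TensorProduct.mk k H H).flip 1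
  let g : H →ₗ[k] H ⊗[k] H :=
    LinearMap.mulLeft k (comul Λ) ∘ₗ TensorProduct.mk k H H 1 ∘ₗ antipode k
  suffices f = g from LinearMap.congr_fun this h
  refine linearMap_ext_comatrix fun d m hm i p => ?_
  have key (i j) : comul (R := k) Λ * (∑ l, m i l ⊗ₜ[k] m l j) =
      if i = j then comul (R := k) Λ else 0 := by
    rw [← hm.comul_apply, ← Bialgebra.comul_mul, hΛ.mul_right, map_smul, hm.counit_apply]
    split_ifs <;> simp
  have h1 : ∑ j, (comul (R := k) Λ * (∑ l, m i l ⊗ₜ[k] m l j)) * (1 : H) ⊗ₜ[k] antipode k (m j p)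
      = comul (R := k) Λ * (1 : H) ⊗ₜ[k] antipode k (m i p) := by
    simp [key]
  have h2 : ∑ j, (comul (R := k) Λ * (∑ l, m i l ⊗ₜ[k] m l j)) * (1 : H) ⊗ₜ[k] antipode k (m j p)
      = comul (R := k) Λ * m i p ⊗ₜ[k] (1 : H) := by
    simp only [mul_assoc, ← Finset.mul_sum, Finset.sum_mul,
      Algebra.TensorProduct.tmul_mul_tmul, mul_one]
    rw [Finset.sum_comm]
    simp only [← TensorProduct.tmul_sum, hm.sum_mul_antipode, TensorProduct.tmul_ite,
      Finset.sum_ite_eq', Finset.mem_univ, if_true]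
  simp [f, g, ← h1, h2]

theorem rslice_comp_mulLeft {f : H →ₗ[k] k} (hf : IsLeftInt f) (h : H) :
    rslice (f ∘ₗ LinearMap.mulLeft k h) Λ = f Λ • antipode k h := by
  have := congr_arg (evalR f) (hΛ.one_tmul_mul_comul h)
  rw [evalR_tmul_mul, evalR_tmul_mul, one_mul] at this
  have h1 : f ∘ₗ LinearMap.mulLeft k (1 : H) = f := by ext; simp
  rw [h1, evalR_comul, evalR_comul, hf, mul_smul_comm, mul_one] at this
  exact this

theorem rslice_comp_mulRight_antipode (h : H) :
    rslice (traceInt k H ∘ₗ LinearMap.mulRight k (antipode k h)) Λ = h := by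
  have := congr_arg (evalR (traceInt k H)) (hΛ.comul_mul_tmul_one h)
  rw [evalR_mul_tmul, evalR_mul_tmul, mul_one] at this
  have h1 : traceInt k H ∘ₗ LinearMap.mulRight k (1 : H) = traceInt k H := by ext; simp
  rw [h1, evalR_comul, evalR_comul, isLeftInt_traceInt, hΛ.traceInt_eq_one, one_smul,
    one_mul] at this
  exact this.symm

theorem antipode_injective : Function.Injective (antipode k (A := H)) := fun x y hxy => by
  rw [← hΛ.rslice_comp_mulRight_antipode x, hxy, hΛ.rslice_comp_mulRight_antipode]

theorem antipode_surjective : Function.Surjective (antipode k (A := H)) :=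
  LinearMap.injective_iff_surjective.1 hΛ.antipode_injective

theorem antipode_eq : antipode k Λ = Λ := by
  have h1 (x : H) : x * antipode k Λ = counit (R := k) x • antipode k Λ := by
    obtain ⟨y, rfl⟩ := hΛ.antipode_surjective x
    rw [← antipode_mul_antidistrib, hΛ.mul_right, map_smul, counit_antipode]
  have h2 := h1 Λ
  rw [hΛ.mul_right, hΛ.counit_eq, one_smul, counit_antipode, hΛ.counit_eq, one_smul] at h2
  exact h2.symm

theorem eq_zero_of_traceInt_mul_left {h : H} (h0 : ∀ x, traceInt k H (h * x) = 0) : h = 0 := by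
  have h1 : traceInt k H ∘ₗ LinearMap.mulLeft k h = 0 := by ext x; simp [h0]
  have h2 := hΛ.rslice_comp_mulLeft isLeftInt_traceInt h
  rw [h1, hΛ.traceInt_eq_one, one_smul] at h2
  apply hΛ.antipode_injective
  rw [← h2]
  simp [rslice]

theorem eq_zero_of_traceInt_mul_right {h : H} (h0 : ∀ x, traceInt k H (x * h) = 0) : h = 0 := by
  refine hΛ.eq_zero_of_traceInt_mul_left fun x => ?_
  obtain ⟨y, rfl⟩ := hΛ.antipode_surjective x
  obtain ⟨z, rfl⟩ := hΛ.antipode_surjective y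
  rw [← traceInt_mul, h0]

theorem isRightInt_traceInt_comp_antipode : IsRightInt (traceInt k H ∘ₗ antipode k) := fun h => by
  apply hΛ.antipode_injective
  rw [antipode_lslice, isLeftInt_traceInt, map_smul, antipode_one]
  rfl

theorem apply_mul_apply_antipode {f ρ : H →ₗ[k] k} (hf : IsLeftInt f) (hρ : IsRightInt ρ) (h : H) :
    f Λ * ρ (antipode k h) = f h * ρ Λ := by
  have := congr_arg ρ (hΛ.rslice_comp_mulLeft hf h)
  rw [apply_rslice, hρ] at this
  simpa [mul_comm] using this.symm

theorem leftInt_eq {f : H →ₗ[k] k} (hf : IsLeftInt f) (h : H) : f h = f Λ * traceInt k H h := by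
  have := hΛ.apply_mul_apply_antipode hf hΛ.isRightInt_traceInt_comp_antipode h
  simpa [traceInt_antipode_antipode, hΛ.antipode_eq, hΛ.traceInt_eq_one] using this.symm

theorem rightInt_eq {ρ : H →ₗ[k] k} (hρ : IsRightInt ρ) (h : H) :
    ρ h = ρ Λ * traceInt k H (antipode k h) := by
  obtain ⟨y, rfl⟩ := hΛ.antipode_surjective h
  have := hΛ.apply_mul_apply_antipode isLeftInt_traceInt hρ y
  rw [hΛ.traceInt_eq_one, one_mul] at this
  rw [this, traceInt_antipode_antipode, mul_comm]

theorem lslice_traceInt (h : H) :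
    lslice (traceInt k H) h = traceInt k H h • lslice (traceInt k H) Λ := by
  rw [← sub_eq_zero, ← Module.forall_dual_apply_eq_zero_iff k]
  intro f
  rw [map_sub, map_smul, ← apply_rslice, ← apply_rslice, sub_eq_zero]
  have hf : IsLeftInt (traceInt k H ∘ₗ rslice f) := fun x => by
    rw [← rslice_comp_rslice, LinearMap.comp_apply, isLeftInt_traceInt]
    rfl
  simpa [mul_comm] using hΛ.leftInt_eq hf h

theorem isGroupLikeElem_lslice : IsGroupLikeElem k (lslice (traceInt k H) Λ) where
  counit_eq_one := by rw [counit_lslice, hΛ.traceInt_eq_one]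
  comul_eq_tmul_self := by
    have h := LinearMap.congr_fun (comul_comp_lslice (traceInt k H)) Λ
    rw [LinearMap.comp_apply, LinearMap.comp_apply] at h
    have key (z : H ⊗[k] H) : (lslice (traceInt k H)).rTensor H z =
        lslice (traceInt k H) Λ ⊗ₜ[k] evalL (traceInt k H) z := by
      induction z with
      | zero => simp
      | add x y hx hy => simp only [map_add, hx, hy, TensorProduct.tmul_add]
      | tmul x y =>
        rw [LinearMap.rTensor_tmul, hΛ.lslice_traceInt, evalL_tmul, TensorProduct.smul_tmul]
    rw [h, key, evalL_comul]

theorem traceInt_antipode (h : H) :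
    traceInt k H (antipode k h) = traceInt k H (h * lslice (traceInt k H) Λ) := by
  set g := lslice (traceInt k H) Λ with hg
  have hgl : IsGroupLikeElem k g := hΛ.isGroupLikeElem_lslice
  have hr : IsRightInt (traceInt k H ∘ₗ LinearMap.mulRight k g) := fun x => by
    have h1 := hΛ.lslice_traceInt (x * g)
    rw [← evalL_comul, Bialgebra.comul_mul, hgl.comul_eq_tmul_self, evalL_mul_tmul, evalL_comul,
      ← hg, ← one_mul g, ← smul_mul_assoc, one_mul g] at h1
    exact hgl.isUnit.mul_right_cancel h1
  have := hΛ.rightInt_eq hr h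
  simpa [hΛ.mul_right, hgl.counit_eq_one, hΛ.traceInt_eq_one] using this.symm

theorem mul_lslice (x : H) : x * lslice (traceInt k H) Λ =
    lslice (traceInt k H) Λ * antipode k (antipode k (antipode k (antipode k x))) := by
  rw [← sub_eq_zero]
  refine hΛ.eq_zero_of_traceInt_mul_right fun y => ?_
  set g := lslice (traceInt k H) Λ
  have h1 : traceInt k H (antipode k (y * x)) =
      traceInt k H (antipode k (antipode k (antipode k x) * y)) := by
    rw [antipode_mul_antidistrib, antipode_mul_antidistrib, traceInt_mul]
  rw [hΛ.traceInt_antipode, hΛ.traceInt_antipode, mul_assoc, mul_assoc,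
    traceInt_mul (antipode k (antipode k x))] at h1
  rw [mul_sub, map_sub, h1, mul_assoc, sub_self]

end IsNormInt

theorem IsGroupLikeElem.exists_pow_eq_one {g : H} (hg : IsGroupLikeElem k g) :
    ∃ N, 0 < N ∧ g ^ N = 1 := by
  have : Finite (GroupLike k H) := (linearIndep_groupLikeVal (R := k) (A := H)).finite
  let γ : GroupLike k H := ⟨g, hg⟩
  obtain ⟨N, hN, h⟩ := isOfFinOrder_iff_pow_eq_one.1 (isOfFinOrder_of_finite γ)
  exact ⟨N, hN, by simpa [γ] using congr_arg GroupLike.val h⟩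

end IntegralTheory

section Trace

variable {k : Type} [Field k]

theorem exists_eigenbasis [CharZero k] [IsAlgClosed k] {V : Type} [AddCommGroup V] [Module k V]
    [FiniteDimensional k V] {f : Module.End k V} {M : ℕ} (hM : 0 < M) {c : k} (hc : c ≠ 0)
    (hf : f ^ M = c • 1) :
    ∃ (d : ℕ) (b : Module.Basis (Fin d) k V) (μ : Fin d → k), ∀ i, f (b i) = μ i • b i := by
  have hss : f.IsSemisimple := by
    refine Module.End.isSemisimple_of_squarefree_aeval_eq_zero
      (p := Polynomial.X ^ M - Polynomial.C c) ?_ ?_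
    · exact (Polynomial.separable_X_pow_sub_C c (by exact_mod_cast hM.ne') hc).squarefree
    · simp [hf, Algebra.algebraMap_eq_smul_one]
  have htop : ⨆ μ, f.eigenspace μ = ⊤ := by
    simp_rw [← hss.isFinitelySemisimple.maxGenEigenspace_eq_eigenspace]
    exact Module.End.iSup_maxGenEigenspace_eq_top f
  let s : Set V := {x | ∃ μ : k, f x = μ • x}
  have hs : ⊤ ≤ Submodule.span k s := by
    rw [← htop]
    exact iSup_le fun μ x hx => Submodule.subset_span ⟨μ, Module.End.mem_eigenspace_iff.1 hx⟩
  let b₀ := Module.Basis.ofSpan hs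
  have : Finite ((linearIndepOn_empty k (id : V → V)).extend (Set.empty_subset s)) :=
    Module.Finite.finite_basis b₀
  obtain ⟨d, ⟨e⟩⟩ := Finite.exists_equiv_fin
    ((linearIndepOn_empty k (id : V → V)).extend (Set.empty_subset s))
  choose μ hμ using fun i : Fin d => Module.Basis.ofSpan_subset hs ⟨e.symm i, rfl⟩
  exact ⟨d, b₀.reindex e, μ, fun i => by simpa [b₀] using hμ i⟩

theorem trace_eq_sum_of_eigenbasis {V : Type} [AddCommGroup V] [Module k V]
    {f : Module.End k V} {d : ℕ} (b : Module.Basis (Fin d) k V) {μ : Fin d → k}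
    (h : ∀ i, f (b i) = μ i • b i) : LinearMap.trace k V f = ∑ i, μ i := by
  rw [LinearMap.trace_eq_matrix_trace k b, Matrix.trace]
  simp [LinearMap.toMatrix_apply, h]

theorem map_eq_conj_map_inv {F : Type} [Field F] (θ : F →+* ℂ) {z : F} {M : ℕ} (hM : 0 < M)
    (hz : z ^ M = 1) : θ z⁻¹ = (starRingEnd ℂ) (θ z) := by
  rw [map_inv₀]
  refine Complex.inv_eq_conj ?_
  refine Complex.norm_eq_one_of_pow_eq_one (n := M) ?_ hM.ne'
  rw [← map_pow, hz, map_one]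

theorem exists_trace_mul_trace_pos [CharZero k] [IsAlgClosed k] {V : Type} [AddCommGroup V]
    [Module k V] [FiniteDimensional k V] (θ : algebraicClosure ℚ k →+* ℂ) {f g : Module.End k V}
    (hgf : g * f = 1) {M : ℕ} (hM : 0 < M) {c : k} (hc : c ≠ 0) (hf : f ^ M = c • 1)
    (hg : LinearMap.trace k V g ≠ 0) :
    ∃ a : algebraicClosure ℚ k, (a : k) = LinearMap.trace k V f * LinearMap.trace k V g ∧
      ∃ r : ℝ, 0 < r ∧ θ a = r := by
  obtain ⟨d, b, μ, hμ⟩ := exists_eigenbasis hM hc hf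
  have hμM (i) : μ i ^ M = c := by
    have h1 (n : ℕ) : (f ^ n) (b i) = μ i ^ n • b i := by
      induction n with
      | zero => simp
      | succ n ih => rw [pow_succ, Module.End.mul_apply, hμ, map_smul, ih, smul_smul, pow_succ']
    have h2 := h1 M
    rw [hf] at h2
    exact (smul_left_injective k (b.ne_zero i) h2).symm
  have hμ0 (i) : μ i ≠ 0 := fun h => hc (by rw [← hμM i, h, zero_pow hM.ne'])
  have hgμ (i) : g (b i) = (μ i)⁻¹ • b i := by
    have := LinearMap.congr_fun hgf (b i)
    rw [Module.End.mul_apply, hμ, map_smul, Module.End.one_apply] at this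
    rw [eq_inv_smul_iff₀ (hμ0 i), this]
  have htf := trace_eq_sum_of_eigenbasis b hμ
  have htg := trace_eq_sum_of_eigenbasis b hgμ
  rw [htg] at hg
  obtain ⟨i₀, -, -⟩ := Finset.exists_ne_zero_of_sum_ne_zero hg
  have hz (i) : (μ i / μ i₀) ^ M = 1 := by rw [div_pow, hμM, hμM, div_self hc]
  have hmem (i) : μ i / μ i₀ ∈ algebraicClosure ℚ k := by
    rw [mem_algebraicClosure_iff']
    refine IsIntegral.of_pow hM ?_
    rw [hz]
    exact isIntegral_one
  let z (i : Fin d) : algebraicClosure ℚ k := ⟨μ i / μ i₀, hmem i⟩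
  have hzM (i) : z i ^ M = 1 := Subtype.ext (hz i)
  have hs : ((∑ i, z i : algebraicClosure ℚ k) : k) = (∑ i, μ i) / μ i₀ := by
    simp [z, Finset.sum_div]
  have hs' : ((∑ i, (z i)⁻¹ : algebraicClosure ℚ k) : k) = (∑ i, (μ i)⁻¹) * μ i₀ := by
    simp [z, Finset.mul_sum, div_eq_mul_inv, mul_comm]
  have hne : θ (∑ i, (z i)⁻¹) ≠ 0 := by
    rw [map_ne_zero]
    intro h
    rw [h] at hs'
    exact mul_ne_zero hg (hμ0 i₀) hs'.symm
  have hconj : θ (∑ i, (z i)⁻¹) = (starRingEnd ℂ) (θ (∑ i, z i)) := by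
    rw [map_sum, map_sum, map_sum]
    exact Finset.sum_congr rfl fun i _ => map_eq_conj_map_inv θ hM (hzM i)
  refine ⟨(∑ i, z i) * ∑ i, (z i)⁻¹, ?_, Complex.normSq (θ (∑ i, z i)), ?_, ?_⟩
  · rw [htf, htg]
    push_cast [hs, hs'] at hs hs' ⊢
    rw [hs, hs', div_mul_eq_mul_div, mul_comm (∑ i, (μ i)⁻¹) (μ i₀), mul_left_comm,
      mul_div_cancel_left₀ _ (hμ0 i₀)]
  · rw [Complex.normSq_pos]
    intro h
    rw [hconj, h, map_zero] at hne
    exact hne rfl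
  · rw [map_mul, hconj, Complex.mul_conj]

theorem trace_pi_matrix {n : ℕ} {d : Fin n → ℕ}
    (a b : (i : Fin n) → Matrix (Fin (d i)) (Fin (d i)) k) :
    LinearMap.trace k _ (LinearMap.mulLeft k a ∘ₗ LinearMap.mulRight k b) =
      ∑ i, (a i).trace * (b i).trace := by
  rw [LinearMap.trace_eq_matrix_trace k (Pi.basis fun i => Matrix.stdBasis k (Fin (d i)) (Fin (d i))),
    Matrix.trace, Fintype.sum_sigma]
  refine Finset.sum_congr rfl fun i _ => ?_
  rw [Fintype.sum_prod_type, Matrix.trace, Matrix.trace, Finset.sum_mul_sum]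
  refine Finset.sum_congr rfl fun p _ => Finset.sum_congr rfl fun q _ => ?_
  have hr (M : Matrix (Fin (d i)) (Fin (d i)) k) :
      (Matrix.stdBasis k (Fin (d i)) (Fin (d i))).repr M (p, q) = M p q := rfl
  rw [Matrix.diag_apply, LinearMap.toMatrix_apply, Pi.basis_repr, Pi.basis_apply, hr,
    Matrix.stdBasis_eq_single]
  simp [Matrix.mul_apply, Matrix.single_apply, Finset.sum_ite_eq, ite_and]

end Trace

section TraceSq

open Coalgebra HopfAlgebra

variable {k H : Type} [Field k] [Ring H] [HopfAlgebra k H] [FiniteDimensional k H]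

theorem IsNormInt.traceInt_one_ne_zero [CharZero k] [IsAlgClosed k] [IsSemisimpleRing H] {Λ : H}
    (hΛ : IsNormInt k Λ) : traceInt k H 1 ≠ 0 := by
  obtain ⟨n, d, hd, ⟨φ⟩⟩ := IsSemisimpleRing.exists_algEquiv_pi_matrix_of_isAlgClosed k H
  let τ : H →ₗ[k] k :=
    ∑ i, Matrix.traceLinearMap (Fin (d i)) k k ∘ₗ LinearMap.proj i ∘ₗ φ.toLinearMap
  have hτ (x : H) : τ x = ∑ i, (φ x i).trace := by simp [τ]
  have hτc (x y : H) : τ (x * y) = τ (y * x) := by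
    simp only [hτ, map_mul, Pi.mul_apply]
    exact Finset.sum_congr rfl fun i _ => Matrix.trace_mul_comm _ _
  have hsingle (i : Fin n) (A : Matrix (Fin (d i)) (Fin (d i)) k) (x : H) :
      τ (x * φ.symm (Pi.single i A)) = (φ x i * A).trace := by
    simp only [hτ, map_mul, AlgEquiv.apply_symm_apply, Pi.mul_apply]
    rw [Finset.sum_eq_single i]
    · simp
    · intro j _ hj
      simp [Pi.single_eq_of_ne hj]
    · simp
  have hτ0 {x : H} (h : ∀ y, τ (x * y) = 0) : x = 0 := by
    apply φ.injective
    ext1 i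
    rw [map_zero, Pi.zero_apply]
    refine Matrix.ext_iff_trace_mul_right.2 fun A => ?_
    rw [← hsingle i, h, zero_mul, Matrix.trace_zero]
  obtain ⟨u, hu⟩ : ∃ u : H, ∀ x, traceInt k H x = τ (u * x) := by
    let B : H →ₗ[k] Module.Dual k H := (LinearMap.mul k H).compr₂ τ
    have hB : Function.Injective B := by
      rw [← LinearMap.ker_eq_bot, LinearMap.ker_eq_bot']
      exact fun x hx => hτ0 fun y => LinearMap.congr_fun hx y
    obtain ⟨u, hu⟩ := (LinearMap.injective_iff_surjective_of_finrank_eq_finrank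
      Subspace.dual_finrank_eq.symm).1 hB (traceInt k H)
    exact ⟨u, fun x => (LinearMap.congr_fun hu x).symm⟩
  have huS (x : H) : u * x = antipode k (antipode k x) * u := by
    rw [← sub_eq_zero]
    refine hτ0 fun y => ?_
    rw [sub_mul, map_sub, mul_assoc, ← hu, traceInt_mul, hu, ← mul_assoc, hτc, mul_assoc, sub_self]
  have hu0 {w : H} (h : u * w = 0) : w = 0 :=
    hΛ.eq_zero_of_traceInt_mul_left fun x => by rw [hu, ← mul_assoc, h, zero_mul, map_zero]
  obtain ⟨v, huv⟩ : ∃ v, u * v = 1 := by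
    have hinj : Function.Injective (LinearMap.mulLeft k u) := by
      rw [← LinearMap.ker_eq_bot, LinearMap.ker_eq_bot']
      exact fun x hx => hu0 hx
    exact LinearMap.injective_iff_surjective.1 hinj 1
  have hvu : v * u = 1 :=
    sub_eq_zero.1 (hu0 (by rw [mul_sub, ← mul_assoc, huv, one_mul, mul_one, sub_self]))
  have hS (x : H) : antipode k (antipode k x) = u * x * v := by
    rw [huS, mul_assoc, huv, mul_one]
  -- some positive power of `u` is central
  obtain ⟨M, hM, hcent⟩ : ∃ M, 0 < M ∧ ∀ x, u ^ M * x = x * u ^ M := by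
    set g := lslice (traceInt k H) Λ with hg
    have hgl : IsGroupLikeElem k g := hΛ.isGroupLikeElem_lslice
    obtain ⟨N, hN, hgN⟩ := IsGroupLikeElem.exists_pow_eq_one hgl
    have hug : Commute u g := by
      have := huS g
      rwa [hgl.antipode_antipode] at this
    have hcen (x : H) : Commute (g * u ^ 2) x := by
      have h1 := hΛ.mul_lslice x
      rw [← hg, hS, hS] at h1
      have h2 : x * (g * u ^ 2) = g * (u * (u * x * v) * v) * u ^ 2 := by
        rw [← mul_assoc, h1]
      have h3 : g * (u * (u * x * v) * v) * u ^ 2 = g * u * u * x * v * (v * u) * u := by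
        simp only [pow_two, mul_assoc]
      rw [h3, hvu, mul_one, mul_assoc _ v u, hvu, mul_one] at h2
      rw [Commute, SemiconjBy, h2]
      simp only [pow_two, mul_assoc]
    refine ⟨2 * N, by positivity, fun x => ?_⟩
    have h4 : (g * u ^ 2) ^ N = u ^ (2 * N) := by
      rw [(hug.symm.pow_right 2).mul_pow, hgN, one_mul, pow_mul]
    rw [← h4]
    exact (hcen x).pow_left N
  have hUV (i) : φ v i * φ u i = 1 := by
    rw [← Pi.mul_apply, ← map_mul, hvu, map_one, Pi.one_apply]
  have hVU (i) : φ u i * φ v i = 1 := by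
    rw [← Pi.mul_apply, ← map_mul, huv, map_one, Pi.one_apply]
  have htr (x : H) : traceInt k H x = ∑ i, (φ (x * u) i).trace * (φ v i).trace := by
    rw [← trace_pi_matrix, traceInt_apply, ← LinearMap.trace_conj' _ φ.toLinearEquiv]
    congr 1
    refine LinearMap.ext fun y => ?_
    simp [LinearEquiv.conj_apply, hS, mul_assoc]
  have htrV (i) : (φ v i).trace = 1 := by
    have h1 := htr (φ.symm (Pi.single i (φ v i)))
    rw [hu, hsingle, hVU, Finset.sum_eq_single i, map_mul, AlgEquiv.apply_symm_apply,
      Pi.mul_apply, Pi.single_eq_same, hUV, Matrix.trace_one, Fintype.card_fin] at h1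
    · have := hd i
      exact (mul_eq_left₀ (Nat.cast_ne_zero.2 (NeZero.ne (d i)))).1 h1.symm
    · intro j _ hj
      simp [Pi.single_eq_of_ne hj]
    · simp
  have : Algebra.IsAlgebraic ℚ (algebraicClosure ℚ k) := by
    convert algebraicClosure.isAlgebraic ℚ k
    · rfl
    · exact Subsingleton.elim _ _
  let θ : algebraicClosure ℚ k →+* ℂ :=
    (IsAlgClosed.lift : algebraicClosure ℚ k →ₐ[ℚ] ℂ).toRingHom
  have hpos (i) : ∃ a : algebraicClosure ℚ k, (a : k) = (φ u i).trace * (φ v i).trace ∧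
      ∃ r : ℝ, 0 < r ∧ θ a = r := by
    have := hd i
    have hcomm : φ u i ^ M ∈ Set.range (Matrix.scalar (Fin (d i))) := by
      refine Matrix.mem_range_scalar_of_commute_single fun p q _ => ?_
      have h1 := congr_fun (congr_arg φ (hcent (φ.symm (Pi.single i (Matrix.single p q 1))))) i
      exact show _ = _ by simpa using h1.symm
    obtain ⟨c, hc⟩ := hcomm
    have hc0 : c ≠ 0 := by
      rintro rfl
      rw [map_zero] at hc
      have h1 : φ v i ^ M * φ u i ^ M = 1 := by
        rw [← (show Commute (φ v i) (φ u i) from (hUV i).trans (hVU i).symm).mul_pow, hUV, one_pow]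
      rw [← hc, mul_zero] at h1
      exact zero_ne_one h1
    have hT (A : Matrix (Fin (d i)) (Fin (d i)) k) :
        LinearMap.trace k _ (Matrix.toLinAlgEquiv' A) = A.trace := Matrix.trace_toLin'_eq A
    rw [← hT, ← hT]
    refine exists_trace_mul_trace_pos θ (M := M) ?_ hM hc0 ?_ ?_
    · rw [← map_mul, hUV, map_one]
    · rw [← map_pow, ← hc, ← map_one (Matrix.toLinAlgEquiv' (R := k)), ← map_smul]
      congr 1
      ext p q
      simp [Matrix.scalar_apply, Matrix.diagonal_apply, Matrix.one_apply]
    · rw [hT, htrV]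
      exact one_ne_zero
  choose a ha r hr hθ using hpos
  intro h0
  rw [htr] at h0
  simp only [one_mul, ← ha] at h0
  have h1 : ∑ i, a i = 0 := by
    apply Subtype.val_injective
    simpa using h0
  have h2 : ((∑ i, r i : ℝ) : ℂ) = 0 := by
    push_cast
    simp only [← hθ, ← map_sum, h1, map_zero]
  have hne : (Finset.univ : Finset (Fin n)).Nonempty := by
    rw [Finset.univ_nonempty_iff]
    by_contra hn
    rw [not_nonempty_iff] at hn
    have h3 : (1 : H) = 0 := φ.injective (Subsingleton.elim _ _)
    have h4 := Bialgebra.counit_one (R := k) (A := H)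
    rw [h3, map_zero] at h4
    exact zero_ne_one h4
  exact (Finset.sum_pos (fun i _ => hr i) hne).ne' (by exact_mod_cast h2)

end TraceSq

section Involutive

open Coalgebra HopfAlgebra

variable {k H : Type} [Field k] [Ring H] [HopfAlgebra k H]

variable (k H) in
/-- The character of the left regular representation. -/
def regChar : H →ₗ[k] k := LinearMap.trace k H ∘ₗ LinearMap.mul k H

theorem regChar_apply (h : H) : regChar k H h = LinearMap.trace k H (LinearMap.mulLeft k h) := rfl

variable [FiniteDimensional k H]

theorem exists_nat_trace_of_isIdempotentElem {V : Type} [AddCommGroup V] [Module k V]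
    [FiniteDimensional k V] {e : Module.End k V} (he : IsIdempotentElem e) :
    ∃ n : ℕ, LinearMap.trace k V e = n := by
  have hp : LinearMap.IsProj (LinearMap.range e) e :=
    ⟨fun x => ⟨x, rfl⟩, by rintro _ ⟨y, rfl⟩; exact LinearMap.congr_fun he y⟩
  exact ⟨_, hp.trace⟩

namespace IsNormInt

variable {Λ : H} (hΛ : IsNormInt k Λ) (h1 : traceInt k H 1 ≠ 0)

include hΛ h1

theorem lslice_eq_one : lslice (traceInt k H) Λ = 1 := by
  have h := hΛ.lslice_traceInt 1
  rw [← evalL_comul, Bialgebra.comul_one, Algebra.TensorProduct.one_def, evalL_tmul] at h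
  exact (smul_right_injective H h1 h).symm

theorem isRightInt_traceInt : IsRightInt (traceInt k H) := fun h => by
  rw [hΛ.lslice_traceInt, hΛ.lslice_eq_one h1]

theorem antipode_pow_four (x : H) :
    antipode k (antipode k (antipode k (antipode k x))) = x := by
  have := hΛ.mul_lslice x
  rw [hΛ.lslice_eq_one h1, mul_one, one_mul] at this
  exact this.symm

theorem trace_eq (T : H →ₗ[k] H) : LinearMap.trace k H T =
    traceInt k H (LinearMap.mul' k H (TensorProduct.map
      (T ∘ₗ antipode k ∘ₗ antipode k ∘ₗ antipode k) LinearMap.id (comul Λ))) := by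
  have hT : T = ∑ i ∈ (ℛ k Λ).index,
      (traceInt k H ∘ₗ LinearMap.mulRight k ((ℛ k Λ).right i)).smulRight
        (T (antipode k (antipode k (antipode k ((ℛ k Λ).left i))))) := by
    ext x
    have h2 := hΛ.rslice_comp_mulLeft isLeftInt_traceInt x
    rw [hΛ.traceInt_eq_one, one_smul] at h2
    conv_lhs => rw [← hΛ.antipode_pow_four h1 x, ← h2, ← evalR_comul, ← (ℛ k Λ).eq]
    simp
  conv_lhs => rw [hT]
  rw [← (ℛ k Λ).eq]
  simp [LinearMap.trace_smulRight]

theorem trace_rslice_comp (f : H →ₗ[k] k) :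
    LinearMap.trace k H (rslice f ∘ₗ antipode k ∘ₗ antipode k) = f Λ * traceInt k H 1 := by
  rw [hΛ.trace_eq h1]
  have h2 : (rslice f ∘ₗ antipode k ∘ₗ antipode k) ∘ₗ antipode k ∘ₗ antipode k ∘ₗ antipode k =
      antipode k ∘ₗ lslice (f ∘ₗ antipode k) := by
    ext x
    simp only [LinearMap.comp_apply, hΛ.antipode_pow_four h1, antipode_lslice]
  have h3 : TensorProduct.map (antipode k ∘ₗ lslice (f ∘ₗ antipode k)) LinearMap.id (comul Λ) =
      (antipode k).rTensor H (comul (R := k) (lslice (f ∘ₗ antipode k) Λ)) := by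
    have := LinearMap.congr_fun (comul_comp_lslice (f ∘ₗ antipode k)) Λ
    simp only [LinearMap.comp_apply] at this
    rw [this, ← LinearMap.comp_apply ((antipode k).rTensor H), ← LinearMap.rTensor_comp]
    rfl
  rw [h2, h3, mul_antipode_rTensor_comul_apply, counit_lslice, LinearMap.comp_apply,
    hΛ.antipode_eq, Algebra.algebraMap_eq_smul_one, map_smul, smul_eq_mul]

end IsNormInt

theorem IsNormInt.regChar_eq_one {Λ : H} (hΛ : IsNormInt k Λ) : regChar k H Λ = 1 := by
  have h : LinearMap.mulLeft k Λ = (counit (R := k) (A := H)).smulRight Λ := by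
    ext x
    simp [hΛ.mul_right]
  rw [regChar_apply, h, LinearMap.trace_smulRight, hΛ.counit_eq]

theorem regChar_rslice (h : H) :
    regChar k H (rslice (regChar k H) h) = (Module.finrank k H : k) * regChar k H h := by
  let Θ : H ⊗[k] H →ₗ[k] H ⊗[k] H := LinearMap.mul' k (H ⊗[k] H) ∘ₗ
    TensorProduct.map (comul (R := k)) (TensorProduct.mk k H H 1)
  have hΘ (x y : H) : Θ (x ⊗ₜ y) = comul (R := k) x * (1 : H) ⊗ₜ[k] y := by simp [Θ]
  have hΘ' (z : H ⊗[k] H) (y : H) : Θ z * (1 : H) ⊗ₜ[k] y = Θ (z * (1 : H) ⊗ₜ[k] y) := by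
    induction z with
    | zero => simp
    | add x y hx hy => simp only [map_add, add_mul, hx, hy]
    | tmul x y => simp [hΘ, mul_assoc]
  have hΞ : Θ ∘ₗ (antipode k).lTensor H ∘ₗ comul = (TensorProduct.mk k H H).flip 1 := by
    refine linearMap_ext_comatrix fun d m hm i j => ?_
    simp only [LinearMap.comp_apply, hm.comul_apply, map_sum, LinearMap.lTensor_tmul, hΘ,
      Finset.sum_mul, Algebra.TensorProduct.tmul_mul_tmul, mul_one, LinearMap.flip_apply,
      TensorProduct.mk_apply]
    rw [Finset.sum_comm]
    simp only [← TensorProduct.tmul_sum, hm.sum_mul_antipode, TensorProduct.tmul_ite,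
      Finset.sum_ite_eq', Finset.mem_univ, if_true]
  have hsurj : Function.Surjective Θ := by
    rw [← LinearMap.range_eq_top, eq_top_iff, ← TensorProduct.span_tmul_eq_top,
      Submodule.span_le]
    rintro _ ⟨x, y, rfl⟩
    have hx : Θ _ = x ⊗ₜ[k] (1 : H) := LinearMap.congr_fun hΞ x
    exact ⟨_, by rw [← hΘ' _ y, hx, Algebra.TensorProduct.tmul_mul_tmul, mul_one, one_mul]⟩
  let e := LinearEquiv.ofBijective Θ ⟨LinearMap.injective_iff_surjective.2 hsurj, hsurj⟩
  have hconj : e.conj (TensorProduct.map (LinearMap.mulLeft k h) LinearMap.id) =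
      LinearMap.mulLeft k (comul (R := k) h) := by
    refine LinearMap.ext fun z => ?_
    obtain ⟨w, rfl⟩ := e.surjective z
    rw [LinearEquiv.conj_apply, LinearMap.comp_apply, LinearMap.comp_apply, LinearEquiv.coe_coe,
      LinearEquiv.coe_coe, LinearEquiv.symm_apply_apply]
    change Θ _ = _ * Θ w
    induction w with
    | zero => simp
    | add x y hx hy => simp only [map_add, mul_add, hx, hy]
    | tmul x y => simp [hΘ, mul_assoc]
  have htr := LinearMap.trace_conj' (TensorProduct.map (LinearMap.mulLeft k h) LinearMap.id) e
  rw [hconj, LinearMap.trace_tensorProduct', LinearMap.trace_id, ← regChar_apply h] at htr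
  rw [mul_comm, ← htr, ← evalR_comul]
  induction comul (R := k) h with
  | zero => simp
  | add x y hx hy =>
    have : LinearMap.mulLeft k (x + y) = LinearMap.mulLeft k x + LinearMap.mulLeft k y := by
      ext; simp [add_mul]
    simp only [map_add, hx, hy, this]
  | tmul x y =>
    have : LinearMap.mulLeft k (x ⊗ₜ[k] y) =
        TensorProduct.map (LinearMap.mulLeft k x) (LinearMap.mulLeft k y) := by
      ext; simp
    rw [this, LinearMap.trace_tensorProduct']
    simp [regChar_apply, mul_comm]

theorem IsNormInt.antipode_antipode [CharZero k] {Λ : H} (hΛ : IsNormInt k Λ)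
    (h1 : traceInt k H 1 ≠ 0) (x : H) : antipode k (antipode k x) = x := by
  let s : Module.End k H := antipode k ∘ₗ antipode k
  have hs (x : H) : s x = antipode k (antipode k x) := rfl
  have hss : s * s = 1 := LinearMap.ext fun x => hΛ.antipode_pow_four h1 x
  have hn0 : 0 < Module.finrank k H := by
    have : Nontrivial H := by
      refine ⟨1, 0, fun h => ?_⟩
      rw [h, map_zero] at h1
      exact h1 rfl
    exact Module.finrank_pos
  have hn : (Module.finrank k H : k) ≠ 0 := by exact_mod_cast hn0.ne'
  have hχs (x : H) : regChar k H (s x) = regChar k H x := by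
    have h2 : LinearMap.mulLeft k (s x) = s * LinearMap.mulLeft k x * s := by
      ext y
      simp only [Module.End.mul_apply, LinearMap.mulLeft_apply, hs, antipode_antipode_mul,
        hΛ.antipode_pow_four h1]
    rw [regChar_apply, regChar_apply, h2, LinearMap.trace_mul_comm, ← mul_assoc, hss, one_mul]
  let G : Module.End k H := (Module.finrank k H : k)⁻¹ • rslice (regChar k H)
  have hG : IsIdempotentElem G := by
    have h2 : rslice (regChar k H) * rslice (regChar k H) =
        (Module.finrank k H : k) • rslice (regChar k H) := by
      refine (rslice_comp_rslice _ _).trans ?_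
      ext x
      have h3 : regChar k H ∘ₗ rslice (regChar k H) = (Module.finrank k H : k) • regChar k H :=
        LinearMap.ext fun y => regChar_rslice y
      rw [h3]
      simp [rslice, LinearMap.lTensor_smul]
    rw [IsIdempotentElem, smul_mul_smul_comm, h2, smul_smul, mul_assoc, inv_mul_cancel₀ hn, mul_one]
  have hGs : Commute G s := by
    refine Commute.smul_left (LinearMap.ext fun x => ?_) _
    rw [Module.End.mul_apply, Module.End.mul_apply, ← evalR_comul, hs, comul_antipode_antipode,
      ← evalR_comul]
    induction comul (R := k) x with
    | zero => simp
    | add x y hx hy => simp only [map_add, hx, hy]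
    | tmul x y =>
      rw [TensorProduct.map_tmul, evalR_tmul, evalR_tmul, map_smul]
      exact congr_arg (· • _) (hχs y)
  let Q : Module.End k H := (2 : k)⁻¹ • (1 + s)
  have hQ : IsIdempotentElem Q := by
    rw [IsIdempotentElem, smul_mul_smul_comm, mul_add, add_mul, add_mul, hss, one_mul, mul_one,
      one_mul, add_comm s 1, ← two_smul k (1 + s), smul_smul]
    congr 1
    norm_num
  have hsQ : s = (2 : k) • Q - 1 := by
    rw [smul_smul, mul_inv_cancel₀ two_ne_zero, one_smul, add_sub_cancel_left]
  have hGQ : IsIdempotentElem (G * Q) :=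
    hG.mul_of_commute (((Commute.one_right G).add_right hGs).smul_right _) hQ
  have hts : LinearMap.trace k H s = traceInt k H 1 := by
    rw [traceInt_apply, LinearMap.mulLeft_one, LinearMap.id_comp]
  have htG : (Module.finrank k H : k) * LinearMap.trace k H (G * s) = LinearMap.trace k H s := by
    have h2 := hΛ.trace_rslice_comp h1 (regChar k H)
    rw [hΛ.regChar_eq_one, one_mul, ← hts] at h2
    rw [← h2, smul_mul_assoc, map_smul, smul_eq_mul, mul_inv_cancel_left₀ hn]
    rfl
  obtain ⟨a, ha⟩ := exists_nat_trace_of_isIdempotentElem hQ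
  obtain ⟨b, hb⟩ := exists_nat_trace_of_isIdempotentElem hQ.one_sub
  obtain ⟨p, hp⟩ := exists_nat_trace_of_isIdempotentElem hGQ
  obtain ⟨q, hq⟩ := exists_nat_trace_of_isIdempotentElem hG
  have htrs : LinearMap.trace k H s = a - b := by
    have h2 : s = Q - (1 - Q) := by rw [hsQ, two_smul]; abel
    rw [h2, map_sub, ha, hb]
  have hab : (a : k) + b = Module.finrank k H := by
    rw [← ha, ← hb, ← map_add, add_sub_cancel, Module.End.one_eq_id, LinearMap.trace_id]
  have htGs : LinearMap.trace k H (G * s) = 2 * p - q := by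
    rw [hsQ, mul_sub, mul_smul_comm, mul_one, map_sub, map_smul, hp, hq, smul_eq_mul]
  rw [htGs, htrs, ← hab] at htG
  have hZ : ((a : ℤ) + b) * (2 * p - q) = a - b := by exact_mod_cast htG
  have hne : (a : ℤ) - b ≠ 0 := fun h => h1 <| by
    rw [← hts, htrs]
    exact_mod_cast congr_arg (Int.cast (R := k)) h
  have ha0 : a ≠ 0 := fun h => by
    rw [h, Nat.cast_zero, LinearMap.IsIdempotentElem.trace_eq_zero_iff hQ] at ha
    rw [ha, smul_zero, zero_sub] at hsQ
    have h2 := LinearMap.congr_fun hsQ 1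
    rw [hs, antipode_one, antipode_one] at h2
    have h3 := congr_arg (counit (R := k)) h2
    simp at h3
    norm_num [eq_neg_iff_add_eq_zero] at h3
  have hb0 : b = 0 := by
    by_contra hb0
    have h2 : (0 : ℤ) < a := by positivity
    have h3 : (0 : ℤ) < b := by positivity
    rcases lt_trichotomy (2 * (p : ℤ) - q) 0 with h | h | h
    · nlinarith
    · rw [h] at hZ; exact hne (by linarith)
    · nlinarith
  rw [hb0, Nat.cast_zero, LinearMap.IsIdempotentElem.trace_eq_zero_iff hQ.one_sub, sub_eq_zero] at hb
  rw [← hb] at hsQ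
  have h2 := LinearMap.congr_fun hsQ x
  rw [hs] at h2
  rw [h2, two_smul, add_sub_cancel_right, Module.End.one_apply]

end Involutive

section Subcoalgebra

open Coalgebra HopfAlgebra

variable {k H : Type} [Field k] [Ring H] [HopfAlgebra k H]

theorem evalR_injective {z w : H ⊗[k] H} (h : ∀ f, evalR f z = evalR f w) : z = w := by
  let b := Module.Basis.ofVectorSpace k H
  refine (b.baseChange H).repr.injective (Finsupp.ext fun i => ?_)
  have key (z : H ⊗[k] H) : (b.baseChange H).repr z i = evalR (b.coord i) z := by
    induction z with
    | zero => simp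
    | add x y hx hy => simp only [map_add, Finsupp.add_apply, hx, hy]
    | tmul x y => simp
  rw [key, key, h]

theorem evalL_injective {z w : H ⊗[k] H} (h : ∀ f, evalL f z = evalL f w) : z = w := by
  refine (TensorProduct.comm k H H).injective (evalR_injective fun f => ?_)
  have key (z : H ⊗[k] H) : evalR f (TensorProduct.comm k H H z) = evalL f z := by
    induction z with
    | zero => simp
    | add x y hx hy => simp only [map_add, hx, hy]
    | tmul x y => simp
  rw [key, key, h]

theorem isSubcoalgebra_iff_slices {E : Submodule k H} : IsSubcoalgebra k H E ↔
    ∀ (f : H →ₗ[k] k), ∀ x ∈ E, rslice f x ∈ E ∧ lslice f x ∈ E := by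
  refine ⟨fun hE f x hx => ?_, fun hE x hx => ?_⟩
  · obtain ⟨w, hw⟩ := hE x hx
    rw [← evalR_comul, ← evalL_comul, ← hw]
    clear hw
    induction w with
    | zero => simp
    | add a b ha hb =>
      simp only [map_add]
      exact ⟨add_mem ha.1 hb.1, add_mem ha.2 hb.2⟩
    | tmul a b => simpa using ⟨E.smul_mem _ a.2, E.smul_mem _ b.2⟩
  · obtain ⟨π, hπ⟩ := E.subtype.exists_leftInverse_of_injective E.ker_subtype
    have hπ' (y : H) (hy : y ∈ E) : (π y : H) = y :=
      congr_arg Subtype.val (LinearMap.congr_fun hπ ⟨y, hy⟩)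
    have h1 : (E.subtype ∘ₗ π).rTensor H (comul (R := k) x) = comul x := by
      refine evalR_injective fun f => ?_
      have key (z : H ⊗[k] H) :
          evalR f ((E.subtype ∘ₗ π).rTensor H z) = (π (evalR f z) : H) := by
        induction z with
        | zero => simp
        | add x y hx hy => simp only [map_add, hx, hy, Submodule.coe_add]
        | tmul x y => simp
      rw [key, evalR_comul, hπ' _ (hE f x hx).1]
    have h2 : (E.subtype ∘ₗ π).lTensor H (comul (R := k) x) = comul x := by
      refine evalL_injective fun f => ?_
      have key (z : H ⊗[k] H) :
          evalL f ((E.subtype ∘ₗ π).lTensor H z) = (π (evalL f z) : H) := by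
        induction z with
        | zero => simp
        | add x y hx hy => simp only [map_add, hx, hy, Submodule.coe_add]
        | tmul x y => simp
      rw [key, evalL_comul, hπ' _ (hE f x hx).2]
    refine ⟨TensorProduct.map π π (comul x), ?_⟩
    conv_rhs => rw [← h1, ← h2]
    rw [TensorProduct.map_map, ← LinearMap.rTensor_comp_lTensor, LinearMap.comp_apply]

theorem IsSubcoalgebra.mul {C D : Submodule k H} (hC : IsSubcoalgebra k H C)
    (hD : IsSubcoalgebra k H D) : IsSubcoalgebra k H (C * D) := fun x hx => by
  induction hx using Submodule.mul_induction_on' with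
  | mem_mul_mem c hc d hd =>
    obtain ⟨u, hu⟩ := hC c hc
    obtain ⟨v, hv⟩ := hD d hd
    rw [Bialgebra.comul_mul, ← hu, ← hv]
    clear hu hv
    induction u with
    | zero => simp
    | add a b ha hb => rw [map_add, add_mul]; exact add_mem ha hb
    | tmul a b =>
      induction v with
      | zero => simp
      | add a b ha hb => rw [map_add, mul_add]; exact add_mem ha hb
      | tmul a' b' =>
        exact ⟨⟨a * a', Submodule.mul_mem_mul a.2 a'.2⟩ ⊗ₜ ⟨b * b', Submodule.mul_mem_mul b.2 b'.2⟩,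
          by simp⟩
  | add x _ y _ hx hy => rw [map_add]; exact add_mem hx hy

theorem isSubcoalgebra_sSup {S : Set (Submodule k H)} (hS : ∀ D ∈ S, IsSubcoalgebra k H D) :
    IsSubcoalgebra k H (sSup S) := by
  refine isSubcoalgebra_iff_slices.2 fun f x hx => ⟨?_, ?_⟩
  · exact (sSup_le fun D hD y hy => le_sSup hD (isSubcoalgebra_iff_slices.1 (hS D hD) f y hy).1 :
      sSup S ≤ (sSup S).comap (rslice f)) hx
  · exact (sSup_le fun D hD y hy => le_sSup hD (isSubcoalgebra_iff_slices.1 (hS D hD) f y hy).2 :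
      sSup S ≤ (sSup S).comap (lslice f)) hx

/-- The Kronecker product of two comatrices. -/
theorem IsComatrix.kronecker {ι κ : Type} [Fintype ι] [DecidableEq ι] [Fintype κ] [DecidableEq κ]
    {m : Matrix ι ι H} {n : Matrix κ κ H} (hm : IsComatrix k m) (hn : IsComatrix k n) :
    IsComatrix k (Matrix.of fun (x y : ι × κ) => m x.1 y.1 * n x.2 y.2) := by
  refine ⟨fun x y => ?_, fun x y => ?_⟩
  · simp only [Matrix.of_apply, Bialgebra.comul_mul, hm.comul_apply, hn.comul_apply,
      Finset.sum_mul_sum, Algebra.TensorProduct.tmul_mul_tmul, Fintype.sum_prod_type]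
  · simp only [Matrix.of_apply, Bialgebra.counit_mul, hm.counit_apply, hn.counit_apply,
      Prod.ext_iff, ite_and, ite_mul, one_mul, zero_mul]

theorem IsComatrix.isCocomm_trace {ι : Type} [Fintype ι] [DecidableEq ι] {m : Matrix ι ι H}
    (hm : IsComatrix k m) : IsCocomm k H m.trace := by
  simp only [IsCocomm, Matrix.trace, Matrix.diag_apply, map_sum, hm.comul_apply,
    TensorProduct.comm_tmul]
  exact Finset.sum_comm

theorem IsCocomm.mul {c d : H} (hc : IsCocomm k H c) (hd : IsCocomm k H d) :
    IsCocomm k H (c * d) := by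
  have h := map_mul (Algebra.TensorProduct.comm k H H) (comul (R := k) c) (comul (R := k) d)
  rw [← Bialgebra.comul_mul] at h
  refine h.trans ?_
  rw [Bialgebra.comul_mul]
  exact congr_arg₂ (· * ·) hc hd

end Subcoalgebra

section Support

open Coalgebra HopfAlgebra

variable {k H : Type} [Field k] [Ring H] [HopfAlgebra k H]

theorem evalL_tmul_mul (f : H →ₗ[k] k) (z : H ⊗[k] H) (a b : H) :
    evalL f (a ⊗ₜ[k] b * z) = b * evalL (f ∘ₗ LinearMap.mulLeft k a) z := by
  induction z with
  | zero => simp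
  | add x y hx hy => simp only [mul_add, map_add, hx, hy]
  | tmul x y => simp

/-- A two-sided integral on `H` with value `1` at `1`. -/
structure IsHaar (l : H →ₗ[k] k) : Prop where
  apply_one : l 1 = 1
  left : IsLeftInt l
  right : IsRightInt l

variable (k H) in
theorem exists_isHaar [FiniteDimensional k H] [CharZero k] [IsAlgClosed k] [IsSemisimpleRing H] :
    ∃ l : H →ₗ[k] k, IsHaar l := by
  obtain ⟨Λ, hΛ⟩ := exists_isNormInt k H
  have h1 := hΛ.traceInt_one_ne_zero
  refine ⟨(traceInt k H 1)⁻¹ • traceInt k H, inv_mul_cancel₀ h1, fun h => ?_, fun h => ?_⟩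
  · have := isLeftInt_traceInt (k := k) h
    simp only [rslice, LinearMap.lTensor_smul, LinearMap.comp_apply, LinearMap.smul_apply,
      map_smul] at this ⊢
    rw [this, smul_assoc]
  · have := hΛ.isRightInt_traceInt h1 h
    simp only [lslice, LinearMap.rTensor_smul, LinearMap.comp_apply, LinearMap.smul_apply,
      map_smul] at this ⊢
    rw [this, smul_assoc]

variable {l : H →ₗ[k] k} {ι : Type} [Fintype ι] [DecidableEq ι] {m : Matrix ι ι H}

theorem IsHaar.sum_antipode_mul_smul (hl : IsHaar l) (hm : IsComatrix k m) (y : H) (i j : ι) :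
    ∑ r, l (antipode k (m r j) * y) • m i r =
      lslice (l ∘ₗ LinearMap.mulLeft k (antipode k (m i j))) y := by
  have h (r : ι) : l (antipode k (m r j) * y) • m i r = ∑ s, m i r * antipode k (m r s) *
      lslice (l ∘ₗ LinearMap.mulLeft k (antipode k (m s j))) y := by
    rw [← mul_one (m i r), ← mul_smul_comm, ← hl.right, ← evalL_comul, Bialgebra.comul_mul,
      hm.comul_antipode, Finset.sum_mul, map_sum, Finset.mul_sum]
    simp only [evalL_tmul_mul, evalL_comul, mul_one, mul_assoc]
  simp only [h]
  rw [Finset.sum_comm]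
  simp [← Finset.sum_mul, hm.sum_mul_antipode]

theorem IsHaar.sum_mul_antipode_smul (hl : IsHaar l) (hm : IsComatrix k m) (y : H) (i j : ι) :
    ∑ r, l (y * antipode k (m i r)) • m r j =
      rslice (l ∘ₗ LinearMap.mulRight k (antipode k (m i j))) y := by
  have h (r : ι) : l (y * antipode k (m i r)) • m r j = ∑ s,
      rslice (l ∘ₗ LinearMap.mulRight k (antipode k (m i s))) y * (antipode k (m s r) * m r j) := by
    rw [← one_mul (m r j), ← smul_mul_assoc, ← hl.left, ← evalR_comul, Bialgebra.comul_mul,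
      hm.comul_antipode, Finset.mul_sum, map_sum, Finset.sum_mul]
    simp only [evalR_mul_tmul, evalR_comul, one_mul, mul_assoc]
  simp only [h]
  rw [Finset.sum_comm]
  simp [← Finset.mul_sum, hm.sum_antipode_mul]

/-- A functional on `H` restricting to the counit on `E` and slicing `H` into `E`. -/
structure IsSupport (E : Submodule k H) (u : H →ₗ[k] k) : Prop where
  apply_eq (x : H) (hx : x ∈ E) : u x = counit (R := k) x
  rslice_mem (h : H) : rslice u h ∈ E
  lslice_mem (h : H) : lslice u h ∈ E

variable [FiniteDimensional k H]

theorem IsHaar.exists_isSupport (hl : IsHaar l) {E : Submodule k H} (hE : IsSubcoalgebra k H E) :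
    ∃ u, IsSupport E u := by
  obtain ⟨π, hπ⟩ := E.subtype.exists_leftInverse_of_injective E.ker_subtype
  let p : H →ₗ[k] H := E.subtype ∘ₗ π
  have hp (y : H) (hy : y ∈ E) : p y = y :=
    congr_arg Subtype.val (LinearMap.congr_fun hπ ⟨y, hy⟩)
  have hpE (y : H) : p y ∈ E := (π y).2
  have hE' := isSubcoalgebra_iff_slices.1 hE
  let u : H →ₗ[k] k := l ∘ₗ LinearMap.mul' k H ∘ₗ TensorProduct.map (antipode k) p ∘ₗ comul
  let v : H →ₗ[k] k := l ∘ₗ LinearMap.mul' k H ∘ₗ TensorProduct.map p (antipode k) ∘ₗ comul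
  have hu (x : H) (hx : x ∈ E) : u x = counit (R := k) x := by
    refine hE.eqOn_of_comatrix (fun d m hm hmE i j => ?_) hx
    simp only [u, LinearMap.comp_apply, hm.comul_apply, map_sum, TensorProduct.map_tmul,
      LinearMap.mul'_apply, hp _ (hmE _ _)]
    rw [← map_sum, hm.sum_antipode_mul, hm.counit_apply]
    split_ifs <;> simp [hl.apply_one]
  have hv (x : H) (hx : x ∈ E) : v x = counit (R := k) x := by
    refine hE.eqOn_of_comatrix (fun d m hm hmE i j => ?_) hx
    simp only [v, LinearMap.comp_apply, hm.comul_apply, map_sum, TensorProduct.map_tmul,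
      LinearMap.mul'_apply, hp _ (hmE _ _)]
    rw [← map_sum, hm.sum_mul_antipode, hm.counit_apply]
    split_ifs <;> simp [hl.apply_one]
  obtain ⟨d, m, hm, -, htop⟩ := (isSubcoalgebra_top (k := k) (H := H)).exists_comatrix
  have hur (h : H) : rslice u h ∈ E := by
    have : (⊤ : Submodule k H) ≤ E.comap (rslice u) := by
      rw [htop, Submodule.span_le]
      rintro _ ⟨⟨i, j⟩, rfl⟩
      simp only [SetLike.mem_coe, Submodule.mem_comap, Function.uncurry, hm.rslice_apply, u,
        LinearMap.comp_apply, hm.comul_apply, map_sum, TensorProduct.map_tmul,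
        LinearMap.mul'_apply, Finset.sum_smul]
      rw [Finset.sum_comm]
      simp only [hl.sum_antipode_mul_smul hm]
      exact sum_mem fun q _ => (hE' _ _ (hpE _)).2
    exact this trivial
  have hvl (h : H) : lslice v h ∈ E := by
    have : (⊤ : Submodule k H) ≤ E.comap (lslice v) := by
      rw [htop, Submodule.span_le]
      rintro _ ⟨⟨i, j⟩, rfl⟩
      simp only [SetLike.mem_coe, Submodule.mem_comap, Function.uncurry, hm.lslice_apply, v,
        LinearMap.comp_apply, hm.comul_apply, map_sum, TensorProduct.map_tmul,
        LinearMap.mul'_apply, Finset.sum_smul]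
      rw [Finset.sum_comm]
      simp only [hl.sum_mul_antipode_smul hm]
      exact sum_mem fun q _ => (hE' _ _ (hpE _)).1
    exact this trivial
  have huv : u = v := LinearMap.ext fun h => by
    rw [← counit_rslice u, ← hv _ (hur h), apply_rslice, hu _ (hvl h), counit_lslice]
  exact ⟨u, hu, hur, huv ▸ hvl⟩

namespace IsSupport

variable {E : Submodule k H} {u : H →ₗ[k] k} (hu : IsSupport E u)

include hu

theorem rslice_apply_of_mem (hE : IsSubcoalgebra k H E) {x : H} (hx : x ∈ E) :
    rslice u x = x := by
  conv_rhs => rw [← LinearMap.id_apply (R := k) x, ← rslice_counit]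
  refine hE.eqOn_of_comatrix (fun d m hm hmE i j => ?_) hx
  simp only [hm.rslice_apply, hu.apply_eq _ (hmE _ _)]

theorem lslice_apply_of_mem (hE : IsSubcoalgebra k H E) {x : H} (hx : x ∈ E) :
    lslice u x = x := by
  conv_rhs => rw [← LinearMap.id_apply (R := k) x, ← lslice_counit]
  refine hE.eqOn_of_comatrix (fun d m hm hmE i j => ?_) hx
  simp only [hm.lslice_apply, hu.apply_eq _ (hmE _ _)]

theorem rslice_eq_lslice (hE : IsSubcoalgebra k H E) : rslice u = lslice u := by
  ext h
  rw [← hu.rslice_apply_of_mem hE (hu.lslice_mem h), ← LinearMap.comp_apply, rslice_comp_lslice,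
    LinearMap.comp_apply, hu.lslice_apply_of_mem hE (hu.rslice_mem h)]

theorem isSubcoalgebra_ker (hE : IsSubcoalgebra k H E) :
    IsSubcoalgebra k H (LinearMap.ker (rslice u)) := by
  refine isSubcoalgebra_iff_slices.2 fun f x hx => ⟨?_, ?_⟩
  · rw [hu.rslice_eq_lslice hE, LinearMap.mem_ker] at hx ⊢
    rw [← LinearMap.comp_apply, ← rslice_comp_lslice, LinearMap.comp_apply, hx, map_zero]
  · rw [LinearMap.mem_ker] at hx ⊢
    rw [← LinearMap.comp_apply, rslice_comp_lslice, LinearMap.comp_apply, hx, map_zero]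

end IsSupport

/-- Every subcoalgebra is the sum of the simple subcoalgebras it contains. -/
theorem IsHaar.le_sSup_simple (hl : IsHaar l) {L : Submodule k H} (hL : IsSubcoalgebra k H L) :
    L ≤ sSup {D | IsSimpleSubcoalgebra k H D ∧ D ≤ L} := by
  set M := sSup {D | IsSimpleSubcoalgebra k H D ∧ D ≤ L} with hMdef
  have hM : IsSubcoalgebra k H M := isSubcoalgebra_sSup fun D hD => hD.1.1
  have hML : M ≤ L := sSup_le fun D hD => hD.2
  obtain ⟨u, hu⟩ := hl.exists_isSupport hM
  have hN : IsSubcoalgebra k H (L ⊓ LinearMap.ker (rslice u)) :=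
    isSubcoalgebra_iff_slices.2 fun f x hx =>
      have h1 := isSubcoalgebra_iff_slices.1 hL f x hx.1
      have h2 := isSubcoalgebra_iff_slices.1 (hu.isSubcoalgebra_ker hM) f x hx.2
      ⟨⟨h1.1, h2.1⟩, ⟨h1.2, h2.2⟩⟩
  have hbot : L ⊓ LinearMap.ker (rslice u) = ⊥ := by
    by_contra hne
    obtain ⟨D, ⟨hDN, hD, hD0⟩, hmin⟩ := wellFounded_lt.has_min
      {D : Submodule k H | D ≤ L ⊓ LinearMap.ker (rslice u) ∧ IsSubcoalgebra k H D ∧ D ≠ ⊥}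
      ⟨_, le_rfl, hN, hne⟩
    have hDM : D ≤ M := le_sSup ⟨⟨hD, hD0, fun D' hD'D hD' hD'0 => by
      by_contra hne'
      exact hmin D' ⟨hD'D.trans hDN, hD', hD'0⟩ (lt_of_le_of_ne hD'D hne')⟩,
      hDN.trans inf_le_left⟩
    refine hD0 ((Submodule.eq_bot_iff _).2 fun x hx => ?_)
    rw [← hu.rslice_apply_of_mem hM (hDM hx)]
    exact (hDN hx).2
  intro x hx
  have h0 : x - rslice u x ∈ L ⊓ LinearMap.ker (rslice u) := by
    refine ⟨sub_mem hx (hML (hu.rslice_mem x)), ?_⟩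
    rw [SetLike.mem_coe, LinearMap.mem_ker, map_sub,
      hu.rslice_apply_of_mem hM (hu.rslice_mem x), sub_self]
  rw [hbot, Submodule.mem_bot, sub_eq_zero] at h0
  rw [h0]
  exact hu.rslice_mem x

end Support

section Conjugate

open Coalgebra HopfAlgebra

variable {k H : Type} [Field k] [Ring H] [HopfAlgebra k H]

theorem IsComatrix.sum_mul_antipode_swap {ι : Type} [Fintype ι] [DecidableEq ι]
    {m : Matrix ι ι H} (hm : IsComatrix k m) (hS : ∀ x : H, antipode k (antipode k x) = x)
    (i j : ι) : ∑ p, m p j * antipode k (m i p) = if i = j then 1 else 0 := by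
  have h := congr_arg (antipode k) (hm.sum_mul_antipode i j)
  simpa [antipode_mul_antidistrib, hS, apply_ite (antipode k (A := H))] using h

theorem rslice_counit_sub (u : H →ₗ[k] k) (y : H) :
    rslice ((counit : H →ₗ[k] k) - u) y = y - rslice u y := by
  conv_rhs => lhs; rw [← LinearMap.id_apply (R := k) y, ← rslice_counit]
  simp [rslice, LinearMap.lTensor_sub]

theorem lslice_counit_sub (u : H →ₗ[k] k) (y : H) :
    lslice ((counit : H →ₗ[k] k) - u) y = y - lslice u y := by
  conv_rhs => lhs; rw [← LinearMap.id_apply (R := k) y, ← lslice_counit]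
  simp [lslice, LinearMap.rTensor_sub]

theorem IsSupport.counit_sub_apply {E : Submodule k H} {u : H →ₗ[k] k} (hu : IsSupport E u)
    {y : H} (hy : y ∈ E) : ((counit : H →ₗ[k] k) - u) y = 0 := by
  rw [LinearMap.sub_apply, hu.apply_eq y hy, sub_self]

/-- The functional `h ↦ l(h₁ S(h₃)) f(h₂)`. -/
def centralAverage (l f : H →ₗ[k] k) : H →ₗ[k] k :=
  l ∘ₗ LinearMap.mul' k H ∘ₗ (antipode k ∘ₗ lslice f).lTensor H ∘ₗ comul

theorem IsComatrix.centralAverage_apply {ι : Type} [Fintype ι] [DecidableEq ι]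
    {m : Matrix ι ι H} (hm : IsComatrix k m) (l f : H →ₗ[k] k) (i j : ι) :
    centralAverage l f (m i j) = ∑ p, ∑ q, f (m p q) * l (m i p * antipode k (m q j)) := by
  simp [centralAverage, hm.comul_apply, hm.lslice_apply, Finset.mul_sum]

variable [FiniteDimensional k H]

theorem IsSupport.counit_sub_mul {K : Subalgebra k H} (hK : IsHopfSubalgebra k H K)
    (hS : ∀ x : H, antipode k (antipode k x) = x) {E : Submodule k H}
    (hEK : ∀ y ∈ E, ∀ x ∈ K, y * x ∈ E) {u : H →ₗ[k] k}
    (hu : IsSupport E u) (h : H) {x : H} (hx : x ∈ K) :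
    ((counit : H →ₗ[k] k) - u) (h * x) =
      counit (R := k) x * ((counit : H →ₗ[k] k) - u) h := by
  set e : H →ₗ[k] k := counit - u with he
  have hgr (a : H) (ha : a ∈ K) (y : H) : e (rslice e y * a) = e (y * a) := by
    rw [rslice_counit_sub, sub_mul, map_sub,
      hu.counit_sub_apply (hEK _ (hu.rslice_mem y) a ha), sub_zero]
  have hgl (a : H) (ha : a ∈ K) (y : H) : e (lslice e y * a) = e (y * a) := by
    rw [lslice_counit_sub, sub_mul, map_sub,
      hu.counit_sub_apply (hEK _ (hu.lslice_mem y) a ha), sub_zero]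
  have key : (e ∘ₗ LinearMap.mulLeft k h) x = (e h • counit (R := k) (A := H)) x := by
    refine hK.1.eqOn_of_comatrix (fun d m hm hmK i j => ?_) hx
    calc (e ∘ₗ LinearMap.mulLeft k h) (m i j) = e (rslice (e ∘ₗ LinearMap.mulRight k (m i j)) h) := by
          rw [apply_rslice]
          exact (hgl _ (hmK i j) h).symm
      _ = ∑ q, e (rslice (e ∘ₗ LinearMap.mulRight k (m q j)) h *
            ∑ p, m p q * antipode k (m i p)) := by
          simp [hm.sum_mul_antipode_swap hS, apply_ite e]
      _ = ∑ p, e (rslice e (h * m p j) * antipode k (m i p)) := by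
          simp only [← evalR_comul e, Bialgebra.comul_mul, hm.comul_apply, Finset.mul_sum, map_sum,
            evalR_mul_tmul, Finset.sum_mul, evalR_comul, mul_assoc]
          exact Finset.sum_comm
      _ = e (h * ∑ p, m p j * antipode k (m i p)) := by
          simp only [hgr _ (hK.2 _ (hmK _ _)), Finset.mul_sum, map_sum, mul_assoc]
      _ = _ := by
          rw [hm.sum_mul_antipode_swap hS, LinearMap.smul_apply, hm.counit_apply]
          split_ifs <;> simp
  rw [mul_comm]
  exact key

theorem IsHaar.mul_le_of_integral_eq [CharZero k] {l : H →ₗ[k] k} (hl : IsHaar l)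
    (hS : ∀ x : H, antipode k (antipode k x) = x) {K : Subalgebra k H}
    (hK : IsHopfSubalgebra k H K) {Λ : H} (hΛ : IsIdempotentIntegral k H K Λ)
    {C D : Submodule k H} (hC : IsSubcoalgebra k H C) (hD : IsSubcoalgebra k H D)
    (h : ∀ d ∈ D, IsCocomm k H d → ∀ c ∈ C, IsCocomm k H c →
      d * (c * Λ) = counit (R := k) d • (c * Λ)) :
    D * C ≤ C * K.toSubmodule := by
  set E := C * K.toSubmodule with hEdef
  have hE : IsSubcoalgebra k H E := hC.mul hK.1
  have hEK (y : H) (hy : y ∈ E) (x : H) (hx : x ∈ K) : y * x ∈ E := by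
    have h2 : E * K.toSubmodule = E := by
      rw [hEdef, mul_assoc, K.isIdempotentElem_toSubmodule.eq]
    rw [← h2]
    exact Submodule.mul_mem_mul hy hx
  obtain ⟨u, hu⟩ := hl.exists_isSupport hE
  obtain ⟨a, m, hm, hmD, hD'⟩ := hD.exists_comatrix
  obtain ⟨b, n, hn, hnC, hC'⟩ := hC.exists_comatrix
  let e : H →ₗ[k] k := counit - u
  have hmn := hm.kronecker hn
  let A : Matrix (Fin a × Fin b) (Fin a × Fin b) k :=
    .of fun x y => e (m x.1 y.1 * n x.2 y.2)
  have hA : IsIdempotentElem A := by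
    ext x y
    have h2 := congr_arg e (hmn.rslice_apply e x y)
    rw [rslice_counit_sub, map_sub, hu.counit_sub_apply (hu.rslice_mem _), sub_zero,
      map_sum] at h2
    simp only [map_smul, smul_eq_mul, Matrix.of_apply] at h2
    simp only [A, Matrix.mul_apply, Matrix.of_apply]
    rw [h2]
    exact Finset.sum_congr rfl fun _ _ => mul_comm _ _
  have htr : A.trace = 0 := by
    have hcΛ : n.trace * Λ ∈ E :=
      Submodule.mul_mem_mul (sum_mem fun i _ => hnC i i) hΛ.1
    have h2 := h m.trace (sum_mem fun i _ => hmD i i) hm.isCocomm_trace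
      n.trace (sum_mem fun i _ => hnC i i) hn.isCocomm_trace
    have h3 := hu.counit_sub_mul hK hS hEK (m.trace * n.trace) hΛ.1
    rw [mul_assoc, h2, hΛ.2.1, one_mul, map_smul] at h3
    rw [hu.counit_sub_apply hcΛ, smul_zero] at h3
    refine Eq.trans ?_ h3.symm
    simp [A, e, Matrix.trace, Finset.sum_mul_sum, Fintype.sum_prod_type]
  have hA0 : A = 0 := by
    have h2 : IsIdempotentElem (Matrix.toLin' A) := by
      rw [IsIdempotentElem, Module.End.mul_eq_comp, ← Matrix.toLin'_mul, hA.eq]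
    rw [← LinearMap.map_eq_zero_iff Matrix.toLin'.toLinearMap Matrix.toLin'.injective]
    refine (LinearMap.IsIdempotentElem.trace_eq_zero_iff h2).1 ?_
    rw [Matrix.trace_toLin'_eq, htr]
  rw [hD', hC', Submodule.span_mul_span, Submodule.span_le]
  rintro _ ⟨_, ⟨⟨i, j⟩, rfl⟩, _, ⟨⟨p, q⟩, rfl⟩, rfl⟩
  have h2 : rslice e (m i j * n p q) = 0 := by
    refine (hmn.rslice_apply e (i, p) (j, q)).trans (Finset.sum_eq_zero fun x _ => ?_)
    have : e (m x.1 j * n x.2 q) = 0 := congr_fun₂ hA0 x (j, q)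
    exact (congr_arg (· • _) this).trans (zero_smul _ _)
  rw [rslice_counit_sub, sub_eq_zero] at h2
  change m i j * n p q ∈ E
  rw [h2]
  exact hu.rslice_mem _

theorem IsHaar.rslice_centralAverage {l : H →ₗ[k] k} (hl : IsHaar l) (f : H →ₗ[k] k) :
    rslice (centralAverage l f) = lslice (centralAverage l f) := by
  refine linearMap_ext_comatrix fun d m hm i j => ?_
  have h (p q : Fin d) : ∑ r, l (m r p * antipode k (m q j)) • m i r =
      ∑ r, l (m i p * antipode k (m q r)) • m r j := by
    rw [hl.sum_mul_antipode_smul hm, hm.rslice_apply]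
    rfl
  simp only [hm.rslice_apply, hm.lslice_apply, hm.centralAverage_apply, Finset.sum_smul, mul_smul]
  rw [Finset.sum_comm]
  conv_rhs => rw [Finset.sum_comm]
  refine Finset.sum_congr rfl fun p _ => ?_
  rw [Finset.sum_comm]
  conv_rhs => rw [Finset.sum_comm]
  refine Finset.sum_congr rfl fun q _ => ?_
  rw [← Finset.smul_sum, h, Finset.smul_sum]

theorem IsHaar.centralAverage_apply_of_isCocomm {l : H →ₗ[k] k} (hl : IsHaar l)
    (hS : ∀ x : H, antipode k (antipode k x) = x) (f : H →ₗ[k] k) {z : H}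
    (hz : IsCocomm k H z) : centralAverage l f z = f z := by
  have h : l ∘ₗ LinearMap.mul' k H ∘ₗ (antipode k ∘ₗ lslice f).lTensor H ∘ₗ
      (TensorProduct.comm k H H).toLinearMap ∘ₗ comul = f := by
    refine linearMap_ext_comatrix fun d m hm i j => ?_
    simp only [LinearMap.comp_apply, hm.comul_apply, map_sum, LinearEquiv.coe_coe,
      TensorProduct.comm_tmul, LinearMap.lTensor_tmul, hm.lslice_apply, map_smul,
      LinearMap.mul'_apply, Finset.mul_sum, mul_smul_comm]
    rw [Finset.sum_comm]
    simp only [← Finset.smul_sum, ← map_sum, hm.sum_mul_antipode_swap hS]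
    simp [apply_ite l, hl.apply_one]
  conv_rhs => rw [← h]
  simp only [centralAverage, LinearMap.comp_apply, LinearEquiv.coe_coe]
  rw [hz]

theorem IsHopfSubalgebra.centralAverage_mul {K : Subalgebra k H} (hK : IsHopfSubalgebra k H K)
    {l f : H →ₗ[k] k} (hf : ∀ h, ∀ x ∈ K, f (h * x) = counit (R := k) x * f h)
    (h : H) {x : H} (hx : x ∈ K) :
    centralAverage l f (h * x) = counit (R := k) x * centralAverage l f h := by
  have key : (centralAverage l f ∘ₗ LinearMap.mulLeft k h) x =
      (centralAverage l f h • counit (R := k) (A := H)) x := by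
    refine hK.1.eqOn_of_comatrix (fun d n hn hnK s t => ?_) hx
    obtain ⟨γ, hγ⟩ : ∃ γ, γ = counit (R := k) (n s t) := ⟨_, rfl⟩
    have h2 : centralAverage l f ∘ₗ LinearMap.mulRight k (n s t) =
        γ • centralAverage l f := by
      refine linearMap_ext_comatrix fun d m hm i j => ?_
      have h3 (p q : Fin _) : ∑ a, ∑ b, f (m p q * n a b) *
          l (m i p * n s a * antipode k (m q j * n b t)) =
          γ * (f (m p q) * l (m i p * antipode k (m q j))) := by
        have h4 : ∑ a, m i p * n s a * antipode k (m q j * n a t) =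
            γ • (m i p * antipode k (m q j)) := by
          have h5 := hn.sum_mul_antipode s t
          calc _ = m i p * (∑ a, n s a * antipode k (n a t)) * antipode k (m q j) := by
                simp only [antipode_mul_antidistrib, Finset.mul_sum, Finset.sum_mul, mul_assoc]
            _ = _ := by
                rw [h5, hγ, hn.counit_apply]
                split_ifs <;> simp
        simp only [hf _ _ (hnK _ _), hn.counit_apply _ _, ite_mul, one_mul, zero_mul,
          Finset.sum_ite_eq, Finset.mem_univ, if_true]
        rw [← Finset.mul_sum, ← map_sum, h4, map_smul, smul_eq_mul]
        ring
      refine ((hm.kronecker hn).centralAverage_apply l f (i, s) (j, t)).trans ?_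
      simp only [Fintype.sum_prod_type, Matrix.of_apply, LinearMap.smul_apply,
        hm.centralAverage_apply, smul_eq_mul, Finset.mul_sum, ← h3]
      refine Finset.sum_congr rfl fun p _ => ?_
      exact Finset.sum_comm
    refine (LinearMap.congr_fun h2 h).trans ?_
    simp [hγ, mul_comm]
  rw [mul_comm]
  exact key

theorem IsSimpleSubcoalgebra.exists_smul_counit [IsAlgClosed k] {C : Submodule k H}
    (hC : IsSimpleSubcoalgebra k H C) {g : H →ₗ[k] k} (hg : rslice g = lslice g) :
    ∃ β : k, ∀ x ∈ C, g x = β * counit (R := k) x := by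
  have hC' := isSubcoalgebra_iff_slices.1 hC.1
  have : Nontrivial C := Submodule.nontrivial_iff_ne_bot.2 hC.2.1
  let T : Module.End k C := (rslice g).restrict fun x hx => (hC' g x hx).1
  obtain ⟨β, hβ⟩ := Module.End.exists_eigenvalue T
  obtain ⟨w, hw, hw0⟩ := hβ.exists_hasEigenvector
  refine ⟨β, fun x hx => ?_⟩
  let W : Submodule k H := C ⊓ LinearMap.ker (rslice g - β • LinearMap.id)
  have hW (x : H) : x ∈ W ↔ x ∈ C ∧ rslice g x = β • x := by
    simp [W, sub_eq_zero]
  have hWC : W = C := by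
    refine hC.2.2 W inf_le_left (isSubcoalgebra_iff_slices.2 fun f y hy => ?_) fun h => ?_
    · rw [hW] at hy
      refine ⟨(hW _).2 ⟨(hC' f y hy.1).1, ?_⟩, (hW _).2 ⟨(hC' f y hy.1).2, ?_⟩⟩
      · rw [hg, ← LinearMap.comp_apply, ← rslice_comp_lslice, LinearMap.comp_apply, ← hg, hy.2,
          map_smul]
      · rw [← LinearMap.comp_apply, rslice_comp_lslice, LinearMap.comp_apply, hy.2, map_smul]
    · have hwW : (w : H) ∈ W :=
        (hW _).2 ⟨w.2, congr_arg Subtype.val (Module.End.mem_eigenspace_iff.1 hw)⟩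
      rw [h, Submodule.mem_bot] at hwW
      exact hw0 (Subtype.ext hwW)
  rw [← hWC, hW] at hx
  rw [← counit_rslice, hx.2, map_smul, smul_eq_mul]

theorem IsHaar.integral_eq_of_mul_le [IsAlgClosed k] {l : H →ₗ[k] k} (hl : IsHaar l)
    (hS : ∀ x : H, antipode k (antipode k x) = x) {K : Subalgebra k H}
    (hK : IsHopfSubalgebra k H K) {Λ : H} (hΛ : IsIdempotentIntegral k H K Λ)
    {C : Submodule k H} (hC : IsSimpleSubcoalgebra k H C) {c d : H} (hc : c ∈ C)
    (hcc : IsCocomm k H c) (hdc : IsCocomm k H d) (hmem : d * c ∈ C * K.toSubmodule) :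
    d * (c * Λ) = counit (R := k) d • (c * Λ) := by
  refine (Module.forall_dual_apply_eq_zero_iff k _).1 ?_ |> sub_eq_zero.1
  intro f'
  let f : H →ₗ[k] k := f' ∘ₗ LinearMap.mulRight k Λ
  have hf (h x : H) (hx : x ∈ K) : f (h * x) = counit (R := k) x * f h := by
    simp [f, mul_assoc, (hΛ.2.2 x hx).1]
  obtain ⟨β, hβ⟩ := hC.exists_smul_counit (hl.rslice_centralAverage f)
  have hβK (z : H) (hz : z ∈ C * K.toSubmodule) :
      centralAverage l f z = β * counit (R := k) z := by
    induction hz using Submodule.mul_induction_on' with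
    | mem_mul_mem y hy x hx =>
      rw [hK.centralAverage_mul hf y hx, hβ y hy, Bialgebra.counit_mul]
      ring
    | add x _ y _ hx hy => rw [map_add, map_add, hx, hy, mul_add]
  have h1 := hβK _ hmem
  have h2 := hβ c hc
  rw [hl.centralAverage_apply_of_isCocomm hS f (hdc.mul hcc), Bialgebra.counit_mul] at h1
  rw [hl.centralAverage_apply_of_isCocomm hS f hcc] at h2
  have h3 : f (d * c) = counit (R := k) d * f c := by rw [h1, h2]; ring
  rw [map_sub, map_smul, smul_eq_mul, sub_eq_zero, ← mul_assoc]
  exact h3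

end Conjugate

variable (k : Type) [Field k] [CharZero k] [IsAlgClosed k]
variable (H : Type) [Ring H] [HopfAlgebra k H]

section Statements

variable [FiniteDimensional k H] [IsSemisimpleRing H]

/-- Theorem 33: `ᶜK` is the largest Hopf subalgebra `L` of `H`
with `L·C ⊆ C·K`; that is, `ᶜK·C ⊆ C·K` and every Hopf subalgebra `L` of `H`
with `L·C ⊆ C·K` satisfies `L ⊆ ᶜK`. -/
theorem statement_12 (K : Subalgebra k H) (hK : IsHopfSubalgebra k H K)
    (Λ : H) (hΛ : IsIdempotentIntegral k H K Λ)
    (C : Submodule k H) (hC : IsSimpleSubcoalgebra k H C) :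
    conjK k H K Λ C * C ≤ C * K.toSubmodule ∧
    ∀ L : Subalgebra k H, IsHopfSubalgebra k H L →
      L.toSubmodule * C ≤ C * K.toSubmodule →
      L.toSubmodule ≤ conjK k H K Λ C := by
  obtain ⟨l, hl⟩ := exists_isHaar k H
  obtain ⟨Γ, hΓ⟩ := exists_isNormInt k H
  have hS := hΓ.antipode_antipode hΓ.traceInt_one_ne_zero
  refine ⟨?_, fun L hL hLC => (hl.le_sSup_simple hL.1).trans (sSup_le_sSup ?_)⟩
  · rw [conjK, sSup_eq_iSup', Submodule.iSup_mul]
    exact iSup_le fun D => hl.mul_le_of_integral_eq hS hK hΛ hC.1 D.2.1.1 D.2.2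
  · rintro D ⟨hD, hDL⟩
    exact ⟨hD, fun d hd hdc c hc hcc => hl.integral_eq_of_mul_le hS hK hΛ hC hc hcc hdc
      (hLC (Submodule.mul_mem_mul (hDL hd) hc))⟩

end Statements

end

end MackeyPaper
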